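/- Let μ be a probability measure supported on a finite set H of increasing C² diffeomorphisms h of [0,1] (so h(0) = 0, h(1) = 1 and h' > 0 on [0,1]). Assume: (R') Σ_{h∈H} μ(h) ln h'(0) ≥ 0 and Σ_{h∈H} μ(h) ln h'(1) ≥ 0; (C') there exists h ∈ H with h'(0) > 1 and h'(1) > 1; (U') for every x ∈ (0,1) there exist h₁, h₂ ∈ H with h₁(x) < x < h₂(x). Then there exists a nonzero invariant Radon measure on (0,1), and any two nonzero invariant Radon measures on (0,1) coincide up to a positive multiplicative constant. -/

import Mathlib

open MeasureTheory Filter Set Function Topology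
open scoped ENNReal NNReal

/-- A Radon measure on the open interval `(0,1)`, viewed as a Borel measure on `ℝ`
concentrated on `(0,1)` and finite on compact subsets of `(0,1)`. -/
def IsRadonOn01 (ν : Measure ℝ) : Prop :=
  ν (Ioo (0:ℝ) 1)ᶜ = 0 ∧ ∀ K : Set ℝ, K ⊆ Ioo (0:ℝ) 1 → IsCompact K → ν K < ⊤

/-- Invariance on `(0,1)` of `ν` for the system given by the maps `h i` with weights
`w i`:  `∫ f dν = Σ_i w i · ∫ f(h i x) dν(x)` for every continuous `f` with compact
support contained in `(0,1)`. -/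
def IsInvOn01 {ι : Type*} [Fintype ι] (h : ι → ℝ → ℝ) (w : ι → ℝ) (ν : Measure ℝ) : Prop :=
  ∀ f : ℝ → ℝ, Continuous f → HasCompactSupport f → tsupport f ⊆ Ioo (0:ℝ) 1 →
    ∫ x, f x ∂ν = ∑ i : ι, w i * ∫ x, f (h i x) ∂ν

namespace IDU

lemma exp_sum_gt {ι : Type*} [Fintype ι] (w m : ι → ℝ) (hw : ∀ i, 0 < w i)
    (hw1 : ∑ i, w i = 1) (hm : ∑ i, w i * m i ≤ 0) (hne : ∃ i, m i ≠ 0) :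
    1 < ∑ i, w i * Real.exp (-(m i)) := by
  have h1 : ∑ i, w i * (1 - m i) < ∑ i, w i * Real.exp (-(m i)) := by
    apply Finset.sum_lt_sum
    · intro i _
      have := Real.add_one_le_exp (-(m i))
      exact mul_le_mul_of_nonneg_left (by linarith) (hw i).le
    · obtain ⟨i, hi⟩ := hne
      refine ⟨i, Finset.mem_univ _, ?_⟩
      have := Real.add_one_lt_exp (x := -(m i)) (by simpa using hi)
      exact mul_lt_mul_of_pos_left (by linarith) (hw i)
  have h2 : ∑ i, w i * (1 - m i) = 1 - ∑ i, w i * m i := by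
    simp only [mul_sub, mul_one, Finset.sum_sub_distrib, hw1]
  linarith

lemma tendsto_exp_neg_zero (B : ℝ) : Tendsto (fun s : ℝ => B * Real.exp (-s)) atTop (𝓝 0) := by
  have := (Real.tendsto_exp_neg_atTop_nhds_zero).const_mul B
  simpa using this

lemma exp_gain {ι : Type*} [Fintype ι] (w m : ι → ℝ) (g : ι → ℝ → ℝ) (B : ℝ) (hw : ∀ i, 0 < w i)
    (hw1 : ∑ i, w i = 1) (hm : ∑ i, w i * m i ≤ 0) (hne : ∃ i, m i ≠ 0)
    (hE : ∀ i s, |g i s - s - m i| ≤ B * Real.exp (-s)) :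
    ∃ κ > 0, ∃ R, ∀ s ≥ R, (1 + κ) * Real.exp (-s) ≤ ∑ i, w i * Real.exp (-(g i s)) := by
  have hS := exp_sum_gt w m hw hw1 hm hne
  set S := ∑ i, w i * Real.exp (-(m i)) with hSdef
  refine ⟨(S - 1) / 2, by linarith, ?_⟩
  have ht : Tendsto (fun s : ℝ => Real.exp (-(B * Real.exp (-s))) * S) atTop (𝓝 S) := by
    have h1 := (tendsto_exp_neg_zero B).neg
    have h2 := (Real.continuous_exp.tendsto _).comp h1
    have h3 := h2.mul_const S
    simpa using h3
  have hev := ht.eventually (eventually_ge_nhds (show 1 + (S - 1) / 2 < S by linarith))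
  obtain ⟨R, hR⟩ := eventually_atTop.1 hev
  refine ⟨R, fun s hs => ?_⟩
  have h := hR s hs
  calc (1 + (S - 1) / 2) * Real.exp (-s)
      ≤ (Real.exp (-(B * Real.exp (-s))) * S) * Real.exp (-s) :=
        mul_le_mul_of_nonneg_right h (Real.exp_pos _).le
    _ = ∑ i, w i * (Real.exp (-(m i)) * Real.exp (-(B * Real.exp (-s))) * Real.exp (-s)) := by
        rw [hSdef, Finset.mul_sum, Finset.sum_mul]
        exact Finset.sum_congr rfl fun i _ => by ring
    _ ≤ _ := by
        apply Finset.sum_le_sum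
        intro i _
        apply mul_le_mul_of_nonneg_left _ (hw i).le
        rw [← Real.exp_add, ← Real.exp_add, Real.exp_le_exp]
        have := (abs_le.1 (hE i s)).2
        linarith

lemma sum_disp {ι : Type*} [Fintype ι] (w m : ι → ℝ) (g : ι → ℝ → ℝ) (B : ℝ) (hw : ∀ i, 0 < w i)
    (hw1 : ∑ i, w i = 1) (hE : ∀ i s, |g i s - s - m i| ≤ B * Real.exp (-s)) (s : ℝ) :
    |∑ i, w i * g i s - s - ∑ i, w i * m i| ≤ B * Real.exp (-s) := by
  have : ∑ i, w i * g i s - s - ∑ i, w i * m i = ∑ i, w i * (g i s - s - m i) := by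
    simp only [mul_sub, Finset.sum_sub_distrib, ← Finset.sum_mul, hw1, one_mul]
  rw [this]
  calc _ ≤ ∑ i, |w i * (g i s - s - m i)| := Finset.abs_sum_le_sum_abs _ _
    _ ≤ ∑ i, w i * (B * Real.exp (-s)) := by
        apply Finset.sum_le_sum
        intro i _
        rw [abs_mul, abs_of_pos (hw i)]
        exact mul_le_mul_of_nonneg_left (hE i s) (hw i).le
    _ = _ := by rw [← Finset.sum_mul, hw1, one_mul]

lemma superV {ι : Type*} [Fintype ι] (w m : ι → ℝ) (g : ι → ℝ → ℝ) (B : ℝ) (hw : ∀ i, 0 < w i)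
    (hw1 : ∑ i, w i = 1) (hm : ∑ i, w i * m i ≤ 0) (hne : ∃ i, m i ≠ 0) (hB : 0 ≤ B)
    (hE : ∀ i s, |g i s - s - m i| ≤ B * Real.exp (-s)) :
    ∃ A ≥ 0, ∃ R, ∀ s ≥ R, ∑ i, w i * (g i s - A * Real.exp (-(g i s)))
      ≤ s - A * Real.exp (-s) := by
  obtain ⟨κ, hκ, R, hR⟩ := exp_gain w m g B hw hw1 hm hne hE
  refine ⟨B / κ, by positivity, R, fun s hs => ?_⟩
  have h1 := hR s hs
  have h2 := (abs_le.1 (sum_disp w m g B hw hw1 hE s)).2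
  have h3 : ∑ i, w i * (g i s - B / κ * Real.exp (-(g i s)))
      = ∑ i, w i * g i s - B / κ * ∑ i, w i * Real.exp (-(g i s)) := by
    rw [Finset.mul_sum, ← Finset.sum_sub_distrib]
    exact Finset.sum_congr rfl fun i _ => by ring
  rw [h3]
  have h4 := mul_le_mul_of_nonneg_left h1 (show 0 ≤ B / κ by positivity)
  have h5 : B / κ * ((1 + κ) * Real.exp (-s)) = B / κ * Real.exp (-s) + B * Real.exp (-s) := by
    field_simp
  linarith

lemma subU {ι : Type*} [Fintype ι] (w m : ι → ℝ) (g : ι → ℝ → ℝ) (B : ℝ) (hw : ∀ i, 0 < w i)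
    (hw1 : ∑ i, w i = 1) (hm : ∑ i, w i * m i = 0) (hne : ∃ i, m i ≠ 0) (hB : 0 ≤ B)
    (hE : ∀ i s, |g i s - s - m i| ≤ B * Real.exp (-s)) :
    ∃ A ≥ 0, ∃ R, ∀ s ≥ R, s + A * Real.exp (-s)
      ≤ ∑ i, w i * (g i s + A * Real.exp (-(g i s))) := by
  obtain ⟨κ, hκ, R, hR⟩ := exp_gain w m g B hw hw1 hm.le hne hE
  refine ⟨B / κ, by positivity, R, fun s hs => ?_⟩
  have h1 := hR s hs
  have h2 := (abs_le.1 (sum_disp w m g B hw hw1 hE s)).1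
  have h3 : ∑ i, w i * (g i s + B / κ * Real.exp (-(g i s)))
      = ∑ i, w i * g i s + B / κ * ∑ i, w i * Real.exp (-(g i s)) := by
    rw [Finset.mul_sum, ← Finset.sum_add_distrib]
    exact Finset.sum_congr rfl fun i _ => by ring
  rw [h3]
  have h4 := mul_le_mul_of_nonneg_left h1 (show 0 ≤ B / κ by positivity)
  have h5 : B / κ * ((1 + κ) * Real.exp (-s)) = B / κ * Real.exp (-s) + B * Real.exp (-s) := by
    field_simp
  linarith

/-- truncation of an increasing subharmonic function -/
lemma mkU {ι : Type*} [Fintype ι] (w : ι → ℝ) (g : ι → ℝ → ℝ) (K : ℝ) (hw : ∀ i, 0 < w i)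
    (hw1 : ∑ i, w i = 1) (hK : 0 ≤ K) (hd : ∀ i s, |g i s - s| ≤ K) (φ : ℝ → ℝ) (R C : ℝ)
    (hmono : ∀ s t, R - K ≤ s → s ≤ t → φ s ≤ φ t)
    (hlip : ∀ s t, R ≤ s → s ≤ t → φ t - φ s ≤ C * (t - s)) (hC : 0 ≤ C)
    (hsub : ∀ s ≥ R, φ s ≤ ∑ i, w i * φ (g i s)) :
    let U := fun s => φ (max s R) - φ R
    Monotone U ∧ (∀ s ≤ R, U s = 0) ∧ (∀ s, U s ≤ ∑ i, w i * U (g i s)) ∧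
      (∀ s t, s ≤ t → U t - U s ≤ C * (t - s)) := by
  intro U
  have hUmono : Monotone U := by
    intro s t hst
    have := hmono (max s R) (max t R) (by linarith [le_max_right s R]) (max_le_max_right _ hst)
    simp only [U]; linarith
  have hU0 : ∀ s ≤ R, U s = 0 := by
    intro s hs; simp [U, max_eq_right hs]
  have hUnn : ∀ s, 0 ≤ U s := by
    intro s
    have := hmono R (max s R) (by linarith) (le_max_right _ _)
    simp only [U]; linarith
  refine ⟨hUmono, hU0, ?_, ?_⟩
  · intro s
    rcases le_total s R with h | h
    · rw [hU0 s h]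
      exact Finset.sum_nonneg fun i _ => mul_nonneg (hw i).le (hUnn _)
    · have h1 := hsub s h
      have h2 : ∑ i, w i * (φ (g i s) - φ R) ≤ ∑ i, w i * U (g i s) := by
        apply Finset.sum_le_sum
        intro i _
        apply mul_le_mul_of_nonneg_left _ (hw i).le
        have h3 := (abs_le.1 (hd i s)).1
        have := hmono (g i s) (max (g i s) R) (by linarith) (le_max_left _ _)
        simp only [U]; linarith
      have h4 : ∑ i, w i * (φ (g i s) - φ R) = ∑ i, w i * φ (g i s) - φ R := by
        simp only [mul_sub, Finset.sum_sub_distrib, ← Finset.sum_mul, hw1, one_mul]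
      have h5 : U s = φ s - φ R := by simp [U, max_eq_left h]
      linarith
  · intro s t hst
    have h1 := hlip (max s R) (max t R) (le_max_right _ _) (max_le_max_right _ hst)
    have h2 : max t R - max s R ≤ t - s := by
      rcases le_total s R with h | h <;> rcases le_total t R with h' | h' <;>
        simp [h, h'] <;> linarith
    have h3 := mul_le_mul_of_nonneg_left h2 hC
    simp only [U]; linarith

lemma exp_diff_bd (s t : ℝ) : Real.exp (-s) - Real.exp (-t) ≤ Real.exp (-s) * (t - s) := by
  have h := Real.add_one_le_exp (s - t)
  have h1 : Real.exp (-t) = Real.exp (-s) * Real.exp (s - t) := by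
    rw [← Real.exp_add]; congr 1; ring
  have h2 := mul_le_mul_of_nonneg_left h (Real.exp_pos (-s)).le
  rw [h1]; linarith

lemma barrier {ι : Type*} [Fintype ι] (w m : ι → ℝ) (g : ι → ℝ → ℝ) (B K : ℝ) (hw : ∀ i, 0 < w i)
    (hw1 : ∑ i, w i = 1) (hm : 0 ≤ ∑ i, w i * m i) (hne : ∃ i, m i ≠ 0) (hB : 0 ≤ B)
    (hE : ∀ i s, |g i s - s - m i| ≤ B * Real.exp (-s))
    (hK : 1 ≤ K) (hd : ∀ i s, |g i s - s| ≤ K) (r : ℝ) :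
    ∃ U W : ℝ → ℝ, ∃ C : ℝ, 0 ≤ C ∧ Monotone U ∧ (∀ s ≤ r, U s = 0) ∧ (∃ s0, 0 < U s0) ∧
      (∀ s, U s ≤ ∑ i, w i * U (g i s)) ∧ (∀ s t, s ≤ t → U t - U s ≤ C * (t - s)) ∧
      (∀ s, 0 ≤ W s) ∧ (∀ s ≥ 0, ∑ i, w i * W (g i s) ≤ W s + C) ∧
      (∀ L, 0 ≤ L → ∃ b, ∀ s, b ≤ W s - L * U s) ∧
      (0 < ∑ i, w i * m i → ∃ b, ∀ s, U s ≤ b) := by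
  rcases hm.eq_or_lt with h0 | hpos
  · -- critical
    obtain ⟨A, hA, R0, hR0⟩ := subU w m g B hw hw1 h0.symm hne hB hE
    have hev : ∀ᶠ R : ℝ in atTop, A * Real.exp (-(R - K)) ≤ 1 := by
      have h1 : Tendsto (fun R : ℝ => A * Real.exp (-(R - K))) atTop (𝓝 0) :=
        (tendsto_exp_neg_zero A).comp (tendsto_atTop_add_const_right _ (-K) tendsto_id)
      exact h1.eventually (eventually_le_nhds (by norm_num))
    obtain ⟨R, hR1, hR2, hR3, hR4⟩ := (hev.and ((eventually_ge_atTop R0).and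
      ((eventually_ge_atTop r).and (eventually_ge_atTop 0)))).exists
    set φ : ℝ → ℝ := fun s => s + A * Real.exp (-s) with hφ
    have hmono : ∀ s t, R - K ≤ s → s ≤ t → φ s ≤ φ t := by
      intro s t hs hst
      have h1 := mul_le_mul_of_nonneg_left (exp_diff_bd s t) hA
      have h2 : A * Real.exp (-s) ≤ 1 :=
        (mul_le_mul_of_nonneg_left (Real.exp_le_exp.2 (by linarith)) hA).trans hR1
      have h3 := mul_le_mul_of_nonneg_right h2 (sub_nonneg.2 hst)
      simp only [hφ]; linarith
    have hlip' : ∀ s t, s ≤ t → φ t - φ s ≤ t - s := by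
      intro s t hst
      have : A * Real.exp (-t) ≤ A * Real.exp (-s) :=
        mul_le_mul_of_nonneg_left (Real.exp_le_exp.2 (by linarith)) hA
      simp only [hφ]; linarith
    obtain ⟨hU1, hU2, hU3, hU4⟩ := mkU w g K hw hw1 (by linarith) hd φ R 1 hmono
      (fun s t _ hst => by rw [one_mul]; exact hlip' s t hst) zero_le_one
      (fun s hs => hR0 s (hR2.trans hs))
    set U := fun s => φ (max s R) - φ R with hUdef
    refine ⟨U, fun s => s ^ 2, 1 + 2 * B + K ^ 2, by positivity, hU1,
      fun s hs => hU2 s (hs.trans hR3), ?_, hU3, ?_, fun s => sq_nonneg s, ?_, ?_, ?_⟩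
    · refine ⟨R + A + 1, ?_⟩
      have h1 : A * Real.exp (-R) ≤ A * 1 :=
        mul_le_mul_of_nonneg_left (Real.exp_le_one_iff.2 (by linarith)) hA
      have h2 : 0 ≤ A * Real.exp (-(R + A + 1)) := by positivity
      simp only [hUdef, hφ, max_eq_left (show R ≤ R + A + 1 by linarith)]
      linarith
    · intro s t hst
      have := hU4 s t hst
      nlinarith [sub_nonneg.2 hst, sq_nonneg K]
    · intro s hs
      have h1 := (abs_le.1 (sum_disp w m g B hw hw1 hE s)).2
      rw [← h0] at h1
      have h2 : ∑ i, w i * (g i s) ^ 2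
          = s ^ 2 + 2 * s * (∑ i, w i * g i s - s) + ∑ i, w i * (g i s - s) ^ 2 := by
        have : ∀ i, w i * (g i s) ^ 2
          = w i * s ^ 2 + 2 * s * (w i * g i s - w i * s) + w i * (g i s - s) ^ 2 := fun i => by ring
        rw [Finset.sum_congr rfl fun i _ => this i]
        rw [Finset.sum_add_distrib, Finset.sum_add_distrib, ← Finset.sum_mul, ← Finset.mul_sum,
          Finset.sum_sub_distrib, ← Finset.sum_mul, hw1]
        ring
      have h3 : ∑ i, w i * (g i s - s) ^ 2 ≤ ∑ i, w i * K ^ 2 := by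
        apply Finset.sum_le_sum
        intro i _
        apply mul_le_mul_of_nonneg_left _ (hw i).le
        exact sq_le_sq' (abs_le.1 (hd i s)).1 (abs_le.1 (hd i s)).2
      rw [← Finset.sum_mul, hw1, one_mul] at h3
      have h4 : s * Real.exp (-s) ≤ 1 := by
        have := Real.add_one_le_exp s
        rw [Real.exp_neg, ← div_eq_mul_inv, div_le_one (Real.exp_pos _)]
        linarith
      have h5 : s * (∑ i, w i * g i s - s) ≤ s * (B * Real.exp (-s)) :=
        mul_le_mul_of_nonneg_left (by linarith) hs
      have h6 : B * (s * Real.exp (-s)) ≤ B * 1 := mul_le_mul_of_nonneg_left h4 hB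
      simp only [h2]
      nlinarith
    · intro L hL
      refine ⟨-(L ^ 2 + L * (|R|)), fun s => ?_⟩
      have h1 : U s ≤ |s| + |R| := by
        have h2 := hlip' R (max s R) (le_max_right _ _)
        have h3 : max s R ≤ max (|s|) (|R|) := max_le_max (le_abs_self _) (le_abs_self _)
        have h4 : max (|s|) (|R|) ≤ |s| + |R| := max_le (by linarith [abs_nonneg R]) (by linarith [abs_nonneg s])
        simp only [hUdef]; linarith
      have h2 := mul_le_mul_of_nonneg_left h1 hL
      have h3 : s ^ 2 = |s| ^ 2 := (sq_abs s).symm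
      nlinarith [sq_nonneg (|s| - L), sq_nonneg (|s|), sq_nonneg L]
    · intro h; linarith
  · -- strict
    set l := ∑ i, w i * m i with hl
    set α := min (1 / K) (l / (2 * K ^ 2)) with hα
    have hK0 : 0 < K := by linarith
    have hα0 : 0 < α := lt_min (by positivity) (by positivity)
    have hα1 : α * K ≤ 1 := by
      have : α ≤ 1 / K := min_le_left _ _
      rwa [le_div_iff₀ hK0] at this
    have hα2 : α * (2 * K ^ 2) ≤ l := by
      have : α ≤ l / (2 * K ^ 2) := min_le_right _ _
      rwa [le_div_iff₀ (by positivity)] at this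
    obtain ⟨R, hR1, hR3, hR4⟩ := (((tendsto_exp_neg_zero B).eventually
      (eventually_le_nhds (show 0 < l / 2 by linarith))).and
      ((eventually_ge_atTop r).and (eventually_ge_atTop 0))).exists
    set φ : ℝ → ℝ := fun s => - Real.exp (-(α * s)) with hφ
    have hmono : ∀ s t, R - K ≤ s → s ≤ t → φ s ≤ φ t := by
      intro s t hs hst
      simp only [hφ, neg_le_neg_iff, Real.exp_le_exp]
      exact mul_le_mul_of_nonneg_left hst hα0.le
    have hlip : ∀ s t, R ≤ s → s ≤ t → φ t - φ s ≤ α * (t - s) := by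
      intro s t hs hst
      have h1 := exp_diff_bd (α * s) (α * t)
      have h2 : Real.exp (-(α * s)) ≤ 1 := by
        rw [Real.exp_le_one_iff]
        have : 0 ≤ α * s := mul_nonneg hα0.le (by linarith)
        linarith
      have h3 : Real.exp (-(α * s)) * (α * t - α * s) ≤ 1 * (α * t - α * s) :=
        mul_le_mul_of_nonneg_right h2 (by nlinarith)
      simp only [hφ]; linarith
    have hsub : ∀ s ≥ R, φ s ≤ ∑ i, w i * φ (g i s) := by
      intro s hs
      have h1 := (abs_le.1 (sum_disp w m g B hw hw1 hE s)).1
      have h2 : B * Real.exp (-s) ≤ l / 2 :=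
        (mul_le_mul_of_nonneg_left (Real.exp_le_exp.2 (by linarith)) hB).trans hR1
      have h3 : ∀ i, w i * Real.exp (-(α * g i s)) ≤
          (w i * (1 + α ^ 2 * K ^ 2) - α * (w i * g i s - w i * s)) * Real.exp (-(α * s)) := by
        intro i
        have hab := abs_le.1 (hd i s)
        have h4 : |-(α * (g i s - s))| ≤ 1 := by
          rw [abs_neg, abs_mul, abs_of_pos hα0]
          exact (mul_le_mul_of_nonneg_left (hd i s) hα0.le).trans hα1
        have h5 := (abs_le.1 (Real.abs_exp_sub_one_sub_id_le h4)).2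
        have h6 : (-(α * (g i s - s))) ^ 2 ≤ α ^ 2 * K ^ 2 := by
          rw [neg_sq, mul_pow]
          exact mul_le_mul_of_nonneg_left (sq_le_sq' hab.1 hab.2) (sq_nonneg _)
        have h7 : Real.exp (-(α * g i s)) = Real.exp (-(α * (g i s - s))) * Real.exp (-(α * s)) := by
          rw [← Real.exp_add]; congr 1; ring
        rw [h7, ← mul_assoc]
        apply mul_le_mul_of_nonneg_right _ (Real.exp_pos _).le
        have h8 : Real.exp (-(α * (g i s - s))) ≤ 1 + α ^ 2 * K ^ 2 - α * (g i s - s) := by linarith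
        have := mul_le_mul_of_nonneg_left h8 (hw i).le
        linarith
      have h4 := Finset.sum_le_sum fun i (_ : i ∈ Finset.univ) => h3 i
      rw [← Finset.sum_mul, Finset.sum_sub_distrib, ← Finset.sum_mul, ← Finset.mul_sum,
        Finset.sum_sub_distrib, ← Finset.sum_mul, hw1] at h4
      have h5 : (1 * (1 + α ^ 2 * K ^ 2) - α * (∑ i, w i * g i s - 1 * s)) ≤ 1 := by
        have h6 : α * (l / 2) ≤ α * (∑ i, w i * g i s - 1 * s) :=
          mul_le_mul_of_nonneg_left (by linarith) hα0.le
        have h7 := mul_le_mul_of_nonneg_left hα2 hα0.le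
        nlinarith
      have h6 := mul_le_mul_of_nonneg_right h5 (Real.exp_pos (-(α * s))).le
      simp only [hφ, mul_neg, Finset.sum_neg_distrib]
      linarith
    obtain ⟨hU1, hU2, hU3, hU4⟩ := mkU w g K hw hw1 (by linarith) hd φ R α hmono
      hlip hα0.le hsub
    set U := fun s => φ (max s R) - φ R with hUdef
    have hUb : ∀ s, U s ≤ 1 := by
      intro s
      have h1 : Real.exp (-(α * R)) ≤ 1 := by
        rw [Real.exp_le_one_iff]
        have : 0 ≤ α * R := mul_nonneg hα0.le (by linarith)
        linarith
      have h2 := Real.exp_pos (-(α * max s R))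
      simp only [hUdef, hφ]; linarith
    refine ⟨U, fun s => |s|, α + K, by positivity, hU1,
      fun s hs => hU2 s (hs.trans hR3), ⟨R + 1, ?_⟩, hU3, ?_, fun s => abs_nonneg s, ?_, ?_, ?_⟩
    · have : Real.exp (-(α * (R + 1))) < Real.exp (-(α * R)) := by
        rw [Real.exp_lt_exp]; linarith
      simp only [hUdef, hφ, max_eq_left (show R ≤ R + 1 by linarith)]
      linarith
    · intro s t hst
      have := hU4 s t hst
      nlinarith [sub_nonneg.2 hst]
    · intro s hs
      have : ∑ i, w i * |g i s| ≤ ∑ i, w i * (|s| + K) := by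
        apply Finset.sum_le_sum
        intro i _
        apply mul_le_mul_of_nonneg_left _ (hw i).le
        have h1 := abs_sub_abs_le_abs_sub (g i s) s
        linarith [hd i s]
      rw [← Finset.sum_mul, hw1, one_mul] at this
      simp only; linarith
    · intro L hL
      refine ⟨-L, fun s => ?_⟩
      have := mul_le_mul_of_nonneg_left (hUb s) hL
      have := abs_nonneg s
      simp only; linarith
    · intro _; exact ⟨1, hUb⟩

end IDU

namespace IDU

structure EndSys {ι : Type*} [Fintype ι] (w m : ι → ℝ) (g : ι → ℝ → ℝ) (B K : ℝ) : Prop where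
  hw : ∀ i, 0 < w i
  hw1 : ∑ i, w i = 1
  hm : 0 ≤ ∑ i, w i * m i
  hne : ∃ i, m i ≠ 0
  hB : 0 ≤ B
  hE : ∀ i s, |g i s - s - m i| ≤ B * Real.exp (-s)
  hK : 1 ≤ K
  hd : ∀ i s, |g i s - s| ≤ K
  mono : ∀ i, StrictMono (g i)
  cont : ∀ i, Continuous (g i)
  up : ∀ s, ∃ i, s < g i s
  dn : ∀ s, ∃ i, g i s < s

lemma EndSys.le_add {ι : Type*} [Fintype ι] {w m : ι → ℝ} {g : ι → ℝ → ℝ} {B K : ℝ}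
    (S : EndSys w m g B K) (i : ι) (s : ℝ) : g i s ≤ s + K := by
  have := (abs_le.1 (S.hd i s)).2; linarith

lemma EndSys.ge_sub {ι : Type*} [Fintype ι] {w m : ι → ℝ} {g : ι → ℝ → ℝ} {B K : ℝ}
    (S : EndSys w m g B K) (i : ι) (s : ℝ) : s - K ≤ g i s := by
  have := (abs_le.1 (S.hd i s)).1; linarith

lemma wavg_le {ι : Type*} [Fintype ι] {w : ι → ℝ} (hw : ∀ i, 0 < w i) (hw1 : ∑ i, w i = 1)
    (a : ι → ℝ) (M : ℝ) (h : ∀ i, a i ≤ M) : ∑ i, w i * a i ≤ M := by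
  calc ∑ i, w i * a i ≤ ∑ i, w i * M :=
        Finset.sum_le_sum fun i _ => mul_le_mul_of_nonneg_left (h i) (hw i).le
    _ = M := by rw [← Finset.sum_mul, hw1, one_mul]

lemma le_wavg {ι : Type*} [Fintype ι] {w : ι → ℝ} (hw : ∀ i, 0 < w i) (hw1 : ∑ i, w i = 1)
    (a : ι → ℝ) (M : ℝ) (h : ∀ i, M ≤ a i) : M ≤ ∑ i, w i * a i := by
  calc M = ∑ i, w i * M := by rw [← Finset.sum_mul, hw1, one_mul]
    _ ≤ ∑ i, w i * a i :=
        Finset.sum_le_sum fun i _ => mul_le_mul_of_nonneg_left (h i) (hw i).le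

lemma claim1 {ι : Type*} [Fintype ι] {w m : ι → ℝ} {g : ι → ℝ → ℝ} {B K : ℝ}
    (S : EndSys w m g B K) {X : Type*} (γ : ι → X → X) (π : X → ℝ)
    (hπ : ∀ i x, π (γ i x) = g i (π x)) (E : Set X) (hE : ∀ x ∈ E, ∀ i, γ i x ∈ E)
    (hunb : ∀ r, ∃ x ∈ E, r < π x) (G : X → ℝ) (r A c : ℝ) (hc : 0 < c)
    (hGb : ∀ x ∈ E, r - K ≤ π x → -A ≤ G x)
    (hQ : ∀ x ∈ E, r < π x → ∑ i, w i * G (γ i x) ≤ G x - c) : False := by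
  set r' := max r 0 with hr'
  obtain ⟨U, W, C, hC, hUm, hU0, ⟨s0, hs0⟩, hUQ, hUL, hW0, hWQ, hWL, -⟩ :=
    barrier w m g B K S.hw S.hw1 S.hm S.hne S.hB S.hE S.hK S.hd r'
  set η := c / (2 * (C + 1)) with hη
  have hηpos : 0 < η := by positivity
  have hηC : η * C ≤ c / 2 := by
    have : η * (C + 1) = c / 2 := by rw [hη]; field_simp
    nlinarith
  have hUnn : ∀ s, 0 ≤ U s := fun s => by
    rcases le_total s r' with h | h
    · rw [hU0 s h]
    · rw [← hU0 r' le_rfl]; exact hUm h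
  set Z := E ∩ {x | r' < π x} with hZ
  have key : ∀ L, 0 ≤ L → ∀ x ∈ Z, -A ≤ G x - L * U (π x) + η * W (π x) := by
    intro L hL x1 hx1
    by_contra hlt
    push Not at hlt
    set u : X → ℝ := fun x => G x - L * U (π x) + η * W (π x) with hu
    obtain ⟨b, hb⟩ := hWL (L / η) (by positivity)
    have hlow : ∀ x ∈ E, r - K ≤ π x → -A + η * b ≤ u x := by
      intro x hx hxr
      have h1 := hGb x hx hxr
      have h2 := mul_le_mul_of_nonneg_left (hb (π x)) hηpos.le
      have h3 : η * (W (π x) - L / η * U (π x)) = η * W (π x) - L * U (π x) := by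
        field_simp
      simp only [hu]; linarith
    have hK := S.hK
    have hrr : r ≤ r' := le_max_left _ _
    have hbdd : BddBelow (u '' Z) := ⟨-A + η * b, by
      rintro _ ⟨x, hx, rfl⟩
      refine hlow x hx.1 ?_
      have := hx.2; simp only [mem_ofPred_eq] at this; linarith⟩
    set I := sInf (u '' Z) with hI
    have hIle : ∀ x ∈ Z, I ≤ u x := fun x hx => csInf_le hbdd ⟨x, hx, rfl⟩
    have hIA : I ≤ -A := (hIle x1 hx1).trans hlt.le
    have hstep : ∀ x ∈ Z, I + c / 2 ≤ u x := by
      intro x hx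
      have hxr : r' < π x := hx.2
      have hx0 : 0 ≤ r' := le_max_right _ _
      have h1 := hQ x hx.1 (by linarith)
      have h2 := hUQ (π x)
      have h3 := hWQ (π x) (by linarith)
      have h4 : I ≤ ∑ i, w i * u (γ i x) := by
        apply le_wavg S.hw S.hw1
        intro i
        by_cases hi : r' < π (γ i x)
        · exact hIle _ ⟨hE x hx.1 i, hi⟩
        · push Not at hi
          have h5 : r - K ≤ π (γ i x) := by
            rw [hπ]; have := S.ge_sub i (π x); linarith
          have h6 := hGb _ (hE x hx.1 i) h5
          have h7 := mul_nonneg hηpos.le (hW0 (π (γ i x)))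
          simp only [hu, hU0 _ hi]; linarith
      have h5 : ∑ i, w i * u (γ i x) = ∑ i, w i * G (γ i x) - L * ∑ i, w i * U (g i (π x))
          + η * ∑ i, w i * W (g i (π x)) := by
        rw [Finset.mul_sum, Finset.mul_sum, ← Finset.sum_sub_distrib, ← Finset.sum_add_distrib]
        exact Finset.sum_congr rfl fun i _ => by simp only [hu, hπ]; ring
      have h6 := mul_le_mul_of_nonneg_left h2 hL
      have h7 := mul_le_mul_of_nonneg_left h3 hηpos.le
      simp only [hu]; linarith
    have : I + c / 2 ≤ I := by
      apply le_csInf (Set.Nonempty.image _ ⟨x1, hx1⟩)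
      rintro _ ⟨x, hx, rfl⟩; exact hstep x hx
    linarith
  obtain ⟨x, hxE, hx⟩ := hunb (max r' s0)
  have hxZ : x ∈ Z := ⟨hxE, (le_max_left _ _).trans_lt hx⟩
  have hUx : 0 < U (π x) := hs0.trans_le (hUm ((le_max_right _ _).trans hx.le))
  set L := (|G x| + η * W (π x) + |A| + 1) / U (π x) with hL
  have hLU : L * U (π x) = |G x| + η * W (π x) + |A| + 1 := by
    rw [hL]; field_simp
  have h0 := mul_nonneg hηpos.le (hW0 (π x))
  have := key L (by positivity) x hxZ
  rw [hLU] at this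
  have := le_abs_self (G x)
  have := le_abs_self A
  linarith

lemma gain_cpt {ι : Type*} [Fintype ι] {w : ι → ℝ} {g : ι → ℝ → ℝ} (hw : ∀ i, 0 < w i)
    (cont : ∀ i, Continuous (g i)) (up : ∀ s, ∃ i, s < g i s) (a b : ℝ) :
    ∃ Λ > 0, ∃ c > 0, ∀ s ∈ Icc a b, Real.exp (Λ * s) + c ≤ ∑ i, w i * Real.exp (Λ * g i s) := by
  rcases lt_or_ge b a with hab | hab
  · exact ⟨1, one_pos, 1, one_pos, fun s hs => absurd (hs.1.trans hs.2) (not_le.2 hab)⟩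
  obtain ⟨s1, hs1, hmin⟩ := isCompact_Icc.exists_isMinOn (nonempty_Icc.2 hab)
    (f := fun s => ∑ i, w i * max (g i s - s) 0) (by fun_prop)
  have hpos : 0 < ∑ i, w i * max (g i s1 - s1) 0 := by
    obtain ⟨i, hi⟩ := up s1
    refine Finset.sum_pos' (fun j _ => mul_nonneg (hw j).le (le_max_right _ _)) ⟨i, Finset.mem_univ _, ?_⟩
    exact mul_pos (hw i) (lt_max_of_lt_left (by linarith))
  set δ := ∑ i, w i * max (g i s1 - s1) 0 with hδ
  have hW : 0 < ∑ i, w i := by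
    obtain ⟨i, hi⟩ := up 0
    exact Finset.sum_pos (fun j _ => hw j) ⟨i, Finset.mem_univ _⟩
  -- use e^x ≥ x^2/2 for x ≥ 0 is avoided: direct choice of index
  have hex : ∀ s ∈ Icc a b, ∃ i, δ / (2 * ∑ i, w i) ≤ g i s - s := by
    intro s hs
    by_contra hcon
    push Not at hcon
    have h1 : δ ≤ ∑ i, w i * max (g i s - s) 0 := hmin hs
    have h2 : ∑ i, w i * max (g i s - s) 0 ≤ ∑ i, w i * (δ / (2 * ∑ i, w i)) :=
      Finset.sum_le_sum fun i _ => mul_le_mul_of_nonneg_left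
        (max_le (hcon i).le (by positivity)) (hw i).le
    rw [← Finset.sum_mul] at h2
    have h3 : (∑ i, w i) * (δ / (2 * ∑ i, w i)) = δ / 2 := by field_simp
    linarith
  set δ' := δ / (2 * ∑ i, w i) with hδ'
  have hδ'pos : 0 < δ' := by positivity
  obtain ⟨i1, -⟩ := up 0
  obtain ⟨j, -, hj⟩ := Finset.exists_min_image (Finset.univ : Finset ι) w ⟨i1, Finset.mem_univ _⟩
  set Λ := 2 / (w j * δ') with hΛ
  have hwj := hw j
  have hΛpos : 0 < Λ := by positivity
  refine ⟨Λ, hΛpos, Real.exp (Λ * a), Real.exp_pos _, fun s hs => ?_⟩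
  obtain ⟨i, hi⟩ := hex s hs
  have h1 : w i * Real.exp (Λ * g i s) ≤ ∑ i, w i * Real.exp (Λ * g i s) :=
    Finset.single_le_sum (f := fun i => w i * Real.exp (Λ * g i s))
      (fun k _ => mul_nonneg (hw k).le (Real.exp_pos _).le) (Finset.mem_univ i)
  have h2 : Real.exp (Λ * s) * (Λ * δ' + 1) ≤ Real.exp (Λ * g i s) := by
    have : Λ * g i s = Λ * s + Λ * (g i s - s) := by ring
    rw [this, Real.exp_add]
    apply mul_le_mul_of_nonneg_left _ (Real.exp_pos _).le
    have h3 := Real.add_one_le_exp (Λ * (g i s - s))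
    have h4 := mul_le_mul_of_nonneg_left hi hΛpos.le
    linarith
  have h3 : w j * (Λ * δ') = 2 := by rw [hΛ]; field_simp
  have h4 : Real.exp (Λ * a) ≤ Real.exp (Λ * s) :=
    Real.exp_le_exp.2 (mul_le_mul_of_nonneg_left hs.1 hΛpos.le)
  have h5 : Real.exp (Λ * s) * 2 ≤ w i * Real.exp (Λ * g i s) := by
    calc Real.exp (Λ * s) * 2 = w j * (Real.exp (Λ * s) * (Λ * δ')) := by rw [← h3]; ring
      _ ≤ w j * Real.exp (Λ * g i s) := by
          apply mul_le_mul_of_nonneg_left _ (hw j).le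
          have := Real.exp_pos (Λ * s)
          linarith
      _ ≤ w i * Real.exp (Λ * g i s) :=
          mul_le_mul_of_nonneg_right (hj i (Finset.mem_univ _)) (Real.exp_pos _).le
  linarith

lemma exitL' {ι : Type*} [Fintype ι] {w m : ι → ℝ} {g : ι → ℝ → ℝ} {B K : ℝ}
    (S : EndSys w m g B K) (a b : ℝ) (u : ℝ → ℝ) (M : ℝ) (hM : ∀ s ∈ Icc a b, u s ≤ M)
    (hQ : ∀ s ∈ Icc a b, u s ≤ ∑ i, w i * u (g i s))
    (hright : ∀ s ∈ Icc a b, ∀ i, b < g i s → u (g i s) ≤ 0)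
    (hleft : ∀ T, 0 ≤ T → (∀ s ∈ Icc a b, u s ≤ T) → ∀ s ∈ Icc a b, ∀ i, g i s < a → u (g i s) ≤ T) :
    ∀ s ∈ Icc a b, u s ≤ 0 := by
  intro s1 hs1
  by_contra hcon
  push Not at hcon
  have hbdd : BddAbove (u '' Icc a b) := ⟨M, by rintro _ ⟨s, hs, rfl⟩; exact hM s hs⟩
  set T := sSup (u '' Icc a b) with hT
  have hTle : ∀ s ∈ Icc a b, u s ≤ T := fun s hs => le_csSup hbdd ⟨s, hs, rfl⟩
  have hTpos : 0 < T := hcon.trans_le (hTle s1 hs1)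
  obtain ⟨Λ, hΛ, c, hc, hgain⟩ := gain_cpt S.hw S.cont S.up a b
  set η := T * Real.exp (-(Λ * (b + K))) with hη
  have hηpos : 0 < η := by positivity
  set v : ℝ → ℝ := fun s => u s + η * Real.exp (Λ * s) with hv
  have hbddv : BddAbove (v '' Icc a b) := ⟨M + η * Real.exp (Λ * b), by
    rintro _ ⟨s, hs, rfl⟩
    have h1 : Real.exp (Λ * s) ≤ Real.exp (Λ * b) :=
      Real.exp_le_exp.2 (mul_le_mul_of_nonneg_left hs.2 hΛ.le)
    have h2 := mul_le_mul_of_nonneg_left h1 hηpos.le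
    have := hM s hs
    simp only [hv]; linarith⟩
  set N := sSup (v '' Icc a b) with hN
  have hNle : ∀ s ∈ Icc a b, v s ≤ N := fun s hs => le_csSup hbddv ⟨s, hs, rfl⟩
  have hTN : T + η * Real.exp (Λ * a) ≤ N := by
    have : T ≤ N - η * Real.exp (Λ * a) := by
      apply csSup_le (Set.Nonempty.image _ ⟨s1, hs1⟩)
      rintro _ ⟨s, hs, rfl⟩
      have h1 : Real.exp (Λ * a) ≤ Real.exp (Λ * s) :=
        Real.exp_le_exp.2 (mul_le_mul_of_nonneg_left hs.1 hΛ.le)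
      have h2 := mul_le_mul_of_nonneg_left h1 hηpos.le
      have := hNle s hs
      simp only [hv] at this; linarith
    linarith
  have hTN' : T ≤ N := by
    have := mul_pos hηpos (Real.exp_pos (Λ * a)); linarith
  have hall : ∀ s ∈ Icc a b, ∀ i, v (g i s) ≤ N := by
    intro s hs i
    rcases lt_or_ge (g i s) a with h | h
    · have h1 := hleft T hTpos.le hTle s hs i h
      have h2 : Real.exp (Λ * g i s) ≤ Real.exp (Λ * a) :=
        Real.exp_le_exp.2 (mul_le_mul_of_nonneg_left h.le hΛ.le)
      have h3 := mul_le_mul_of_nonneg_left h2 hηpos.le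
      simp only [hv]; linarith
    · rcases lt_or_ge b (g i s) with h' | h'
      · have h1 := hright s hs i h'
        have h4 : g i s ≤ b + K := by have := S.le_add i s; have := hs.2; linarith
        have h2 : Real.exp (Λ * g i s) ≤ Real.exp (Λ * (b + K)) :=
          Real.exp_le_exp.2 (mul_le_mul_of_nonneg_left h4 hΛ.le)
        have h3 := mul_le_mul_of_nonneg_left h2 hηpos.le
        have h5 : η * Real.exp (Λ * (b + K)) = T := by
          rw [hη, mul_assoc, ← Real.exp_add]; simp
        simp only [hv]; linarith
      · exact hNle _ ⟨h, h'⟩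
  have hfin : N ≤ N - η * c := by
    apply csSup_le (Set.Nonempty.image _ ⟨s1, hs1⟩)
    rintro _ ⟨s, hs, rfl⟩
    have h1 := wavg_le S.hw S.hw1 (fun i => v (g i s)) N (hall s hs)
    have h2 : ∑ i, w i * v (g i s) = ∑ i, w i * u (g i s)
        + η * ∑ i, w i * Real.exp (Λ * g i s) := by
      rw [Finset.mul_sum, ← Finset.sum_add_distrib]
      exact Finset.sum_congr rfl fun i _ => by simp only [hv]; ring
    have h3 := mul_le_mul_of_nonneg_left (hgain s hs) hηpos.le
    have h4 := hQ s hs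
    simp only [hv] at *
    linarith
  have := mul_pos hηpos hc
  linarith

lemma exitL {ι : Type*} [Fintype ι] {w m : ι → ℝ} {g : ι → ℝ → ℝ} {B K : ℝ}
    (S : EndSys w m g B K) (a b : ℝ) (u : ℝ → ℝ) (M : ℝ) (hM : ∀ s ∈ Icc a b, u s ≤ M)
    (hQ : ∀ s ∈ Icc a b, u s ≤ ∑ i, w i * u (g i s))
    (hright : ∀ s ∈ Icc a b, ∀ i, b < g i s → u (g i s) ≤ 0)
    (hleft : ∀ s ∈ Icc a b, ∀ i, g i s < a → u (g i s) ≤ 0) :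
    ∀ s ∈ Icc a b, u s ≤ 0 :=
  exitL' S a b u M hM hQ hright fun _ hT _ s hs i h => (hleft s hs i h).trans hT

lemma rlemma {ι : Type*} [Fintype ι] {w m : ι → ℝ} {g : ι → ℝ → ℝ} {B K : ℝ}
    (S : EndSys w m g B K) (hcrit : ∑ i, w i * m i ≤ 0) :
    ∃ R0, ∀ R ≥ R0, ∀ (D : ℝ → ℝ) (M T : ℝ), (∀ s, D s ≤ M) →
      (∀ s, D s ≤ ∑ i, w i * D (g i s)) → (∀ s, R - K ≤ s → s ≤ R → D s ≤ T) →
      ∀ s ≥ R, D s ≤ T := by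
  obtain ⟨A, hA, R0, hR0⟩ := superV w m g B S.hw S.hw1 hcrit S.hne S.hB S.hE
  refine ⟨R0, fun R hR D M T hM hQ hT s hs => ?_⟩
  set V : ℝ → ℝ := fun s => s - A * Real.exp (-s) with hV
  have hVm : Monotone V := by
    intro x y hxy
    have : A * Real.exp (-y) ≤ A * Real.exp (-x) :=
      mul_le_mul_of_nonneg_left (Real.exp_le_exp.2 (by linarith)) hA
    simp only [hV]; linarith
  have hVge : ∀ t ≥ 0, t - A ≤ V t := by
    intro t ht
    have : A * Real.exp (-t) ≤ A * 1 :=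
      mul_le_mul_of_nonneg_left (Real.exp_le_one_iff.2 (by linarith)) hA
    simp only [hV]; linarith
  have key : ∀ ε > 0, D s ≤ T + ε * (V s - V (R - K)) := by
    intro ε hε
    set b := max s (max 0 (|M - T| / ε + A + V (R - K))) with hb
    have hb1 : M - T ≤ ε * (V b - V (R - K)) := by
      have h1 := hVge b ((le_max_left _ _).trans (le_max_right _ _))
      have h2 : |M - T| / ε + A + V (R - K) ≤ b := (le_max_right _ _).trans (le_max_right _ _)
      have h3 : |M - T| / ε ≤ V b - V (R - K) := by linarith
      have h4 := (div_le_iff₀ hε).1 h3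
      have := le_abs_self (M - T)
      linarith
    have := exitL S R b (fun t => D t - T - ε * (V t - V (R - K)))
      (M - T - ε * (V R - V (R - K))) ?_ ?_ ?_ ?_ s ⟨hs, le_max_left _ _⟩
    · linarith
    · intro t ht
      have h1 := hM t
      have h2 := mul_le_mul_of_nonneg_left (hVm ht.1) hε.le
      linarith
    · intro t ht
      have h1 := hQ t
      have h2 := mul_le_mul_of_nonneg_left (hR0 t (by linarith [ht.1])) hε.le
      have h3 : ∑ i, w i * (D (g i t) - T - ε * (V (g i t) - V (R - K)))
          = ∑ i, w i * D (g i t) - ε * ∑ i, w i * V (g i t) - (∑ i, w i) * (T - ε * V (R - K)) := by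
        rw [Finset.mul_sum, Finset.sum_mul, ← Finset.sum_sub_distrib, ← Finset.sum_sub_distrib]
        exact Finset.sum_congr rfl fun i _ => by ring
      rw [S.hw1] at h3
      simp only [hV] at *
      linarith
    · intro t ht i hi
      have h1 := hM (g i t)
      have h2 := mul_le_mul_of_nonneg_left (hVm hi.le) hε.le
      linarith
    · intro t ht i hi
      have h0 : R - K ≤ g i t := by have := S.ge_sub i t; have := ht.1; linarith
      have h1 := hT (g i t) h0 hi.le
      have h2 := mul_le_mul_of_nonneg_left (hVm h0) hε.le
      linarith
  have hlim : Tendsto (fun ε : ℝ => T + ε * (V s - V (R - K))) (𝓝[>] 0) (𝓝 T) := by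
    have : Tendsto (fun ε : ℝ => T + ε * (V s - V (R - K))) (𝓝 0) (𝓝 (T + 0 * (V s - V (R - K)))) :=
      Continuous.tendsto (by fun_prop) 0
    simp only [zero_mul, add_zero] at this
    exact this.mono_left nhdsWithin_le_nhds
  exact ge_of_tendsto hlim (by filter_upwards [self_mem_nhdsWithin] with ε hε using key ε hε)

lemma window {ι : Type*} [Fintype ι] {w m : ι → ℝ} {g : ι → ℝ → ℝ} {B K : ℝ}
    (S : EndSys w m g B K) (F : ℝ → ℝ) (hF : Monotone F) (hQ : ∀ s, ∑ i, w i * F (g i s) = F s) :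
    (∃ b, ∀ s ≥ 0, F (s + K) - F s ≤ b) ∧ (0 < ∑ i, w i * m i → ∃ b, ∀ s, F s ≤ b) := by
  obtain ⟨U, W, C, hC, hUm, hU0, ⟨s0, hs0⟩, hUQ, hUL, -, -, -, hUb⟩ :=
    barrier w m g B K S.hw S.hw1 S.hm S.hne S.hB S.hE S.hK S.hd 0
  have hK := S.hK
  have hs0p : 0 ≤ s0 := by
    by_contra h
    push Not at h
    rw [hU0 s0 h.le] at hs0; exact lt_irrefl _ hs0
  have hUpos : ∀ s ≥ s0, 0 < U s := fun s hs => hs0.trans_le (hUm hs)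
  have hUnn : ∀ s, 0 ≤ U s := fun s => by
    rcases le_total s 0 with h | h
    · rw [hU0 s h]
    · rw [← hU0 0 le_rfl]; exact hUm h
  set C0 := (F s0 - F (-K)) / U s0 with hC0
  have hC0nn : 0 ≤ C0 := div_nonneg (sub_nonneg.2 (hF (by linarith))) hs0.le
  have key : ∀ T ≥ s0, ∃ θ, 0 ≤ θ ∧ θ ≤ C0 ∧ θ * U (T + K) = F T - F (-K) ∧
      ∀ s ∈ Icc 0 T, θ * U s ≤ F s - F (-K) := by
    intro T hT
    have hUT := hUpos (T + K) (by linarith)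
    set θ := (F T - F (-K)) / U (T + K) with hθ
    have hθnn : 0 ≤ θ := div_nonneg (sub_nonneg.2 (hF (by linarith))) hUT.le
    have hθU : θ * U (T + K) = F T - F (-K) := by rw [hθ]; field_simp
    have hmain : ∀ s ∈ Icc 0 T, θ * U s - (F s - F (-K)) ≤ 0 := by
      apply exitL S 0 T (fun s => θ * U s - (F s - F (-K))) (θ * U T - (F 0 - F (-K)))
      · intro s hs
        have h1 := mul_le_mul_of_nonneg_left (hUm hs.2) hθnn
        have h2 := hF hs.1
        linarith
      · intro s hs
        have h1 := mul_le_mul_of_nonneg_left (hUQ s) hθnn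
        have h3 : ∑ i, w i * (θ * U (g i s) - (F (g i s) - F (-K)))
          = θ * ∑ i, w i * U (g i s) - ∑ i, w i * F (g i s) + (∑ i, w i) * F (-K) := by
          rw [Finset.mul_sum, Finset.sum_mul, ← Finset.sum_sub_distrib, ← Finset.sum_add_distrib]
          exact Finset.sum_congr rfl fun i _ => by ring
        rw [S.hw1, hQ] at h3

        linarith
      · intro s hs i hi
        have h4 : g i s ≤ T + K := by have := S.le_add i s; have := hs.2; linarith
        have h1 := mul_le_mul_of_nonneg_left (hUm h4) hθnn
        have h2 := hF hi.le
        linarith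
      · intro s hs i hi
        have h4 : -K ≤ g i s := by have := S.ge_sub i s; have := hs.1; linarith
        have h2 := hF h4
        simp only [hU0 _ hi.le]; linarith
    refine ⟨θ, hθnn, ?_, hθU, fun s hs => by have := hmain s hs; linarith⟩
    rw [hC0, le_div_iff₀ hs0]
    have := hmain s0 ⟨hs0p, hT⟩
    linarith
  constructor
  · refine ⟨max (C0 * (C * (2 * K))) (F (s0 + K) - F 0), fun s hs => ?_⟩
    rcases le_total s0 s with h | h
    · apply le_max_of_le_left
      obtain ⟨θ, h1, h2, h3, h4⟩ := key (s + K) (by linarith)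
      have h5 := h4 s ⟨hs, by linarith⟩
      have h6 := hUL s (s + K + K) (by linarith)
      have h7 : F (s + K) - F s ≤ θ * (U (s + K + K) - U s) := by
        rw [mul_sub]; linarith
      have h8 : θ * (U (s + K + K) - U s) ≤ C0 * (C * (2 * K)) :=
        mul_le_mul h2 (by linarith) (sub_nonneg.2 (hUm (by linarith))) hC0nn
      linarith
    · apply le_max_of_le_right
      have h1 := hF (show s + K ≤ s0 + K by linarith)
      have h2 := hF hs
      linarith
  · intro hpos
    obtain ⟨b, hb⟩ := hUb hpos
    refine ⟨F (-K) + C0 * b, fun s => ?_⟩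
    obtain ⟨θ, h1, h2, h3, h4⟩ := key (max s s0) (le_max_right _ _)
    have h5 := hF (le_max_left s s0)
    have h6 : θ * U (max s s0 + K) ≤ C0 * b := mul_le_mul h2 (hb _) (hUnn _) hC0nn
    linarith

end IDU

namespace IDU

structure Sys {ι : Type*} [Fintype ι] (w mp mm : ι → ℝ) (g : ι → ℝ → ℝ) (B K : ℝ) : Prop where
  plus : EndSys w mp g B K
  minus : EndSys w mm (fun i s => -g i (-s)) B K
  i0 : ∃ i, 0 < mp i ∧ 0 < mm i

lemma Sys.neg {ι : Type*} [Fintype ι] {w mp mm : ι → ℝ} {g : ι → ℝ → ℝ} {B K : ℝ}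
    (S : Sys w mp mm g B K) : Sys w mm mp (fun i s => -g i (-s)) B K := by
  refine ⟨S.minus, ?_, ?_⟩
  · have := S.plus
    simpa only [neg_neg] using this
  · obtain ⟨i, h1, h2⟩ := S.i0
    exact ⟨i, h2, h1⟩

lemma exists_var {Y : Type*} [LinearOrder Y] (H1 H2 : Y → ℝ) (h1 : Monotone H1) (h2 : Monotone H2)
    (E : Set Y) (hE : E.Nonempty) :
    ∃ n : Y → ℝ, (∀ x ∈ E, ∀ y ∈ E, x ≤ y →
        |(H1 y - H2 y) - (H1 x - H2 x)| ≤ n y - n x ∧ n y - n x ≤ (H1 y + H2 y) - (H1 x + H2 x)) ∧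
      ∀ γ : Y → Y, Monotone γ → (∀ x ∈ E, γ x ∈ E) →
        (∀ x ∈ E, H1 (γ x) - H2 (γ x) = H1 x - H2 x) →
        ∀ x ∈ E, ∀ y ∈ E, x ≤ y → n y - n x ≤ n (γ y) - n (γ x) := by
  set D : Y → ℝ := fun y => H1 y - H2 y with hD
  set H : Y → ℝ := fun y => H1 y + H2 y with hH
  have hHm : Monotone H := fun x y h => add_le_add (h1 h) (h2 h)
  have hle : ∀ s : Set Y, eVariationOn D s ≤ eVariationOn H s := by
    intro s
    refine iSup_mono fun p => Finset.sum_le_sum fun i _ => ?_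
    have hm := p.2.2.1 (Nat.le_succ i)
    have a1 := h1 hm
    have a2 := h2 hm
    rw [edist_dist, edist_dist, Real.dist_eq, Real.dist_eq]
    apply ENNReal.ofReal_le_ofReal
    simp only [Nat.succ_eq_add_one] at a1 a2
    rw [abs_of_nonneg (sub_nonneg.2 (hHm hm)), abs_le]
    simp only [hD, hH]
    constructor <;> linarith
  have hub : ∀ x ∈ E, ∀ y ∈ E, eVariationOn D (E ∩ Icc x y) ≤ ENNReal.ofReal (H y - H x) :=
    fun x hx y hy => (hle _).trans ((hHm.monotoneOn E).eVariationOn_eq hx hy).le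
  have hloc : LocallyBoundedVariationOn D E := fun x y hx hy =>
    ((hub x hx y hy).trans_lt ENNReal.ofReal_lt_top).ne
  obtain ⟨y0, hy0⟩ := hE
  have hsub : ∀ x ∈ E, ∀ y ∈ E, x ≤ y → variationOnFromTo D E y0 y - variationOnFromTo D E y0 x
      = (eVariationOn D (E ∩ Icc x y)).toReal := by
    intro x hx y hy hxy
    rw [← variationOnFromTo.eq_of_le D E hxy, ← variationOnFromTo.add hloc hy0 hx hy]; ring
  refine ⟨fun y => variationOnFromTo D E y0 y, ?_, ?_⟩
  · intro x hx y hy hxy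
    refine ⟨variationOnFromTo.abs_sub_le_sub_of_le hloc hy0 hx hy hxy, ?_⟩
    rw [hsub x hx y hy hxy]
    exact ENNReal.toReal_le_of_le_ofReal (sub_nonneg.2 (hHm hxy)) (hub x hx y hy)
  · intro γ hγ hγE hγD x hx y hy hxy
    rw [hsub x hx y hy hxy, hsub _ (hγE x hx) _ (hγE y hy) (hγ hxy)]
    apply ENNReal.toReal_mono (hloc _ _ (hγE x hx) (hγE y hy))
    have e : eVariationOn D (E ∩ Icc x y) = eVariationOn (D ∘ γ) (E ∩ Icc x y) :=
      eVariationOn.eq_of_eqOn fun z hz => (hγD z hz.1).symm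
    rw [e]
    exact eVariationOn.comp_le_of_monotoneOn D γ (hγ.monotoneOn _)
      fun z hz => ⟨hγE z hz.1, hγ hz.2.1, hγ hz.2.2⟩

lemma unb {ι : Type*} [Fintype ι] {w m : ι → ℝ} {g : ι → ℝ → ℝ} {B K : ℝ}
    (S : EndSys w m g B K) {Y : Type*} (γ : ι → Y → Y) (π : Y → ℝ)
    (hπ : ∀ i x, π (γ i x) = g i (π x)) (E : Set Y) (hE : ∀ x ∈ E, ∀ i, γ i x ∈ E)
    (hne : E.Nonempty) : ∀ r, ∃ x ∈ E, r < π x := by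
  intro r
  by_contra hcon
  push Not at hcon
  have hbdd : BddAbove (π '' E) := ⟨r, by rintro _ ⟨x, hx, rfl⟩; exact hcon x hx⟩
  obtain ⟨i, hi⟩ := S.up (sSup (π '' E))
  set z := sSup (π '' E) with hz
  have hev : ∀ᶠ t in 𝓝 z, z < g i t := (S.cont i).continuousAt.eventually (lt_mem_nhds hi)
  obtain ⟨δ, hδ, hball⟩ := Metric.eventually_nhds_iff.1 hev
  obtain ⟨_, ⟨x, hx, rfl⟩, hxz⟩ := exists_lt_of_lt_csSup (hne.image π) (show z - δ < z by linarith)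
  have h1 : π x ≤ z := le_csSup hbdd ⟨x, hx, rfl⟩
  have h2 : z < g i (π x) := hball (by rw [Real.dist_eq, abs_lt]; constructor <;> linarith)
  have h3 : g i (π x) ≤ z := by rw [← hπ]; exact le_csSup hbdd ⟨_, hE x hx i, rfl⟩
  linarith

lemma eventually_move {ι : Type*} [Fintype ι] {w m : ι → ℝ} {g : ι → ℝ → ℝ} {B K : ℝ}
    (S : EndSys w m g B K) (i : ι) (hi : 0 < m i) :
    ∃ T, ∀ s ≥ T, s + m i / 2 ≤ g i s := by
  have h1 : ∀ᶠ s in atTop, B * Real.exp (-s) ≤ m i / 2 :=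
    (tendsto_exp_neg_zero B).eventually (eventually_le_nhds (by linarith))
  obtain ⟨T, hT⟩ := eventually_atTop.1 h1
  refine ⟨T, fun s hs => ?_⟩
  have h2 := hT s hs
  have h3 := (abs_le.1 (S.hE i s)).1
  linarith

lemma max_inv {ι : Type*} [Fintype ι] {w : ι → ℝ} (hw : ∀ i, 0 < w i) (hw1 : ∑ i, w i = 1)
    (a : ι → ℝ) (M : ℝ) (h : ∀ i, a i ≤ M) (he : ∑ i, w i * a i = M) : ∀ i, a i = M := by
  intro i
  by_contra hne
  have hlt : a i < M := lt_of_le_of_ne (h i) hne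
  have : ∑ i, w i * a i < ∑ i, w i * M :=
    Finset.sum_lt_sum (fun j _ => mul_le_mul_of_nonneg_left (h j) (hw j).le)
      ⟨i, Finset.mem_univ _, mul_lt_mul_of_pos_left hlt (hw i)⟩
  rw [← Finset.sum_mul, hw1, one_mul] at this
  linarith

lemma core {ι : Type*} [Fintype ι] {w mp mm : ι → ℝ} {g : ι → ℝ → ℝ} {B K : ℝ}
    (S : Sys w mp mm g B K) {Y : Type*} [LinearOrder Y] (γ : ι → Y → Y) (π : Y → ℝ)
    (hπm : Monotone π) (hγ : ∀ i, Monotone (γ i))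
    (hπ : ∀ i x, π (γ i x) = g i (π x)) (H1 H2 : Y → ℝ) (h1 : Monotone H1) (h2 : Monotone H2)
    (hQ1 : ∀ y, ∑ i, w i * H1 (γ i y) = H1 y) (hQ2 : ∀ y, ∑ i, w i * H2 (γ i y) = H2 y)
    (m M : ℝ) (hmM : m < M) (hbd : ∀ y, m ≤ H1 y - H2 y ∧ H1 y - H2 y ≤ M)
    (hmax : ∃ y, H1 y - H2 y = M) (hmin : ∃ y, H1 y - H2 y = m) : False := by
  have hw := S.plus.hw
  have hw1 := S.plus.hw1
  have hπ' : ∀ i x, -π (γ i x) = -g i (-(-π x)) := fun i x => by rw [hπ, neg_neg]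
  set EM : Set Y := {y | H1 y - H2 y = M} with hEM
  set Em : Set Y := {y | H1 y - H2 y = m} with hEm
  have hQD : ∀ y, ∑ i, w i * (H1 (γ i y) - H2 (γ i y)) = H1 y - H2 y := by
    intro y
    rw [← hQ1 y, ← hQ2 y, ← Finset.sum_sub_distrib]
    exact Finset.sum_congr rfl fun i _ => by ring
  have hEMi : ∀ x ∈ EM, ∀ i, γ i x ∈ EM := by
    intro x hx i
    have hx' : H1 x - H2 x = M := hx
    exact max_inv hw hw1 (fun i => H1 (γ i x) - H2 (γ i x)) M (fun i => (hbd _).2)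
      ((hQD x).trans hx') i
  have hEmi : ∀ x ∈ Em, ∀ i, γ i x ∈ Em := by
    intro x hx i
    have hx' : H1 x - H2 x = m := hx
    have := max_inv hw hw1 (fun i => -(H1 (γ i x) - H2 (γ i x))) (-m)
      (fun i => neg_le_neg (hbd _).1) (by
        simp only [mul_neg, Finset.sum_neg_distrib]; rw [hQD x, hx']) i
    exact neg_injective this
  set E := EM ∪ Em with hE
  have hEi : ∀ x ∈ E, ∀ i, γ i x ∈ E := by
    rintro x (hx | hx) i
    · exact Or.inl (hEMi x hx i)
    · exact Or.inr (hEmi x hx i)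
  have hDi : ∀ i, ∀ x ∈ E, H1 (γ i x) - H2 (γ i x) = H1 x - H2 x := by
    rintro i x (hx | hx)
    · exact (show H1 (γ i x) - H2 (γ i x) = M from hEMi x hx i).trans hx.symm
    · exact (show H1 (γ i x) - H2 (γ i x) = m from hEmi x hx i).trans hx.symm
  have hEne : E.Nonempty := by
    obtain ⟨y, hy⟩ := hmax; exact ⟨y, Or.inl hy⟩
  have hup := unb S.plus γ π hπ E hEi hEne
  have hupM := unb S.plus γ π hπ EM hEMi hmax
  have hupm := unb S.plus γ π hπ Em hEmi hmin
  have hdn := unb S.minus γ (fun y => -π y) hπ' E hEi hEne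
  have hlt : ∀ x y, π x < π y → x < y := fun x y h => by
    by_contra hc; exact absurd (hπm (not_lt.1 hc)) (not_le.2 h)
  obtain ⟨n, hn1, hn2⟩ := exists_var H1 H2 h1 h2 E hEne
  set ρ : Y → ℝ := fun y => ∑ i, w i * n (γ i y) - n y with hρ
  have hρm : ∀ x ∈ E, ∀ y ∈ E, x ≤ y → ρ y - ρ x
      = ∑ i, w i * ((n (γ i y) - n (γ i x)) - (n y - n x)) := by
    intro x hx y hy hxy
    have : ∑ i, w i * ((n (γ i y) - n (γ i x)) - (n y - n x)) =
        ∑ i, w i * n (γ i y) - ∑ i, w i * n (γ i x) - (∑ i, w i) * (n y - n x) := by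
      rw [Finset.sum_mul, ← Finset.sum_sub_distrib, ← Finset.sum_sub_distrib]
      exact Finset.sum_congr rfl fun i _ => by ring
    rw [this, hw1]; simp only [hρ]; ring
  have hterm : ∀ x ∈ E, ∀ y ∈ E, x ≤ y → ∀ i, 0 ≤ w i * ((n (γ i y) - n (γ i x)) - (n y - n x)) :=
    fun x hx y hy hxy i => mul_nonneg (hw i).le
      (sub_nonneg.2 (hn2 (γ i) (hγ i) (fun z hz => hEi z hz i) (hDi i) x hx y hy hxy))
  have hρmono : ∀ x ∈ E, ∀ y ∈ E, x ≤ y → ρ x ≤ ρ y := by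
    intro x hx y hy hxy
    have := hρm x hx y hy hxy
    have h0 := Finset.sum_nonneg (fun i (_ : i ∈ Finset.univ) => hterm x hx y hy hxy i)
    linarith
  set G : Y → ℝ := fun y => H1 y + H2 y - n y with hG
  have hGm : ∀ x ∈ E, ∀ y ∈ E, x ≤ y → G x ≤ G y := by
    intro x hx y hy hxy
    have := (hn1 x hx y hy hxy).2
    simp only [hG]; linarith
  have hGQ : ∀ y, ∑ i, w i * G (γ i y) = G y - ρ y := by
    intro y
    have : ∑ i, w i * G (γ i y) = ∑ i, w i * H1 (γ i y) + ∑ i, w i * H2 (γ i y)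
        - ∑ i, w i * n (γ i y) := by
      rw [← Finset.sum_add_distrib, ← Finset.sum_sub_distrib]
      exact Finset.sum_congr rfl fun i _ => by simp only [hG]; ring
    rw [this, hQ1, hQ2]; simp only [hG, hρ]; ring
  have hρle : ∀ x ∈ E, ρ x ≤ 0 := by
    intro x0 hx0
    by_contra hc
    push Not at hc
    obtain ⟨z, hzE, hz⟩ := hdn (-(π x0 - K))
    refine claim1 S.plus γ π hπ E hEi hup G (π x0) (-G z) (ρ x0) hc ?_ ?_
    · intro y hy hyr
      rw [neg_neg]
      exact hGm z hzE y hy (hlt _ _ (by linarith)).le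
    · intro y hy hyr
      rw [hGQ]
      have := hρmono x0 hx0 y hy (hlt _ _ hyr).le
      linarith
  have hρge : ∀ x ∈ E, 0 ≤ ρ x := by
    intro x0 hx0
    by_contra hc
    push Not at hc
    obtain ⟨z, hzE, hz⟩ := hup (π x0 + K)
    refine claim1 S.minus γ (fun y => -π y) hπ' E hEi hdn (fun y => -G y) (-π x0) (G z) (-ρ x0)
      (by linarith) ?_ ?_
    · intro y hy hyr
      exact neg_le_neg (hGm y hy z hzE (hlt _ _ (by linarith)).le)
    · intro y hy hyr
      simp only [mul_neg, Finset.sum_neg_distrib]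
      rw [hGQ]
      have := hρmono y hy x0 hx0 (hlt _ _ (by linarith)).le
      linarith
  have hρ0 : ∀ x ∈ E, ρ x = 0 := fun x hx => le_antisymm (hρle x hx) (hρge x hx)
  have hinv : ∀ i, ∀ x ∈ E, ∀ y ∈ E, x ≤ y → n (γ i y) - n (γ i x) = n y - n x := by
    intro i x hx y hy hxy
    have h0 := hρm x hx y hy hxy
    rw [hρ0 x hx, hρ0 y hy, sub_zero] at h0
    have := (Finset.sum_eq_zero_iff_of_nonneg
      (fun i _ => hterm x hx y hy hxy i)).1 h0.symm i (Finset.mem_univ _)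
    rcases mul_eq_zero.1 this with h | h
    · exact absurd h (hw i).ne'
    · linarith
  obtain ⟨i, hip, him⟩ := S.i0
  obtain ⟨T1, hT1⟩ := eventually_move S.plus i hip
  obtain ⟨T2, hT2⟩ := eventually_move S.minus i him
  obtain ⟨y', hy'E, hy'⟩ := hup (max T1 0)
  have hy'1 : T1 < π y' := (le_max_left _ _).trans_lt hy'
  have hy'0 : 0 < π y' := (le_max_right _ _).trans_lt hy'
  obtain ⟨y, hyE, hy⟩ := hdn (max T2 0)
  have hy1 : T2 < -π y := (le_max_left _ _).trans_lt hy
  have hy0 : 0 < -π y := (le_max_right _ _).trans_lt hy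
  obtain ⟨a, haE, ha⟩ := hupM (π y')
  obtain ⟨b, hbE, hb⟩ := hupm (π y')
  have hiter : ∀ k : ℕ, (γ i)^[k] y' ∈ E ∧ (γ i)^[k] y ∈ E ∧ π y' + k * (mp i / 2) ≤ π ((γ i)^[k] y') ∧
      π ((γ i)^[k] y) ≤ π y ∧ (γ i)^[k] y ≤ y ∧ (γ i)^[k] y ≤ (γ i)^[k] y' ∧
      n ((γ i)^[k] y') - n ((γ i)^[k] y) = n y' - n y := by
    intro k
    induction k with
    | zero => simp only [iterate_zero, id]; exact ⟨hy'E, hyE, by simp, le_rfl, le_rfl, (hlt _ _ (by linarith)).le, trivial⟩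
    | succ k ih =>
      obtain ⟨a1, a2, a3, a4, a5, a6, a7⟩ := ih
      simp only [iterate_succ', comp]
      have hk : (0:ℝ) ≤ k * (mp i / 2) := by positivity
      have b4 : π (γ i ((γ i)^[k] y)) < π ((γ i)^[k] y) := by
        have := hT2 (-π ((γ i)^[k] y)) (by linarith)
        simp only [neg_neg] at this
        rw [hπ]; linarith
      refine ⟨hEi _ a1 i, hEi _ a2 i, ?_, b4.le.trans a4, (hlt _ _ b4).le.trans a5, hγ i a6, ?_⟩
      · have := hT1 (π ((γ i)^[k] y')) (by linarith)
        rw [hπ]; push_cast; linarith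
      · rw [hinv i _ a2 _ a1 a6, a7]
  obtain ⟨k, hk⟩ := exists_nat_gt ((max (π a) (π b) - π y') / (mp i / 2))
  rw [div_lt_iff₀ (by linarith)] at hk
  obtain ⟨a1, a2, a3, a4, a5, a6, a7⟩ := hiter k
  set z' := (γ i)^[k] y'
  set z := (γ i)^[k] y
  have haz : a ≤ z' := (hlt _ _ (by have := le_max_left (π a) (π b); linarith)).le
  have hbz : b ≤ z' := (hlt _ _ (by have := le_max_right (π a) (π b); linarith)).le
  have hya : y' ≤ a := (hlt _ _ ha).le
  have hyb : y' ≤ b := (hlt _ _ hb).le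
  have haE' : a ∈ E := Or.inl haE
  have hbE' : b ∈ E := Or.inr hbE
  have nn : ∀ x ∈ E, ∀ y ∈ E, x ≤ y → n x ≤ n y := fun x hx y hy hxy => by
    have := (abs_nonneg _).trans (hn1 x hx y hy hxy).1; linarith
  have e1 := nn z a2 y hyE a5
  have ea : H1 a - H2 a = M := haE
  have eb : H1 b - H2 b = m := hbE
  have e2 : M - m ≤ n z' - n y' := by
    rcases le_total a b with hab | hab
    · have c1 := (abs_le.1 (hn1 a haE' b hbE' hab).1).1
      have c2 := nn y' hy'E a haE' hya
      have c3 := nn b hbE' z' a1 hbz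
      linarith
    · have c1 := (abs_le.1 (hn1 b hbE' a haE' hab).1).2
      have c2 := nn y' hy'E b hbE' hyb
      have c3 := nn a haE' z' a1 haz
      linarith
  linarith

end IDU

namespace IDU

noncomputable def lft (F : ℝ → ℝ) (k : Fin 3) (x : ℝ) : ℝ :=
  if k = 0 then leftLim F x else if k = 1 then F x else rightLim F x

noncomputable def flt (k : Fin 3) (x : ℝ) : Filter ℝ :=
  if k = 0 then 𝓝[<] x else if k = 1 then pure x else 𝓝[>] x

lemma fin3 (k : Fin 3) : k = 0 ∨ k = 1 ∨ k = 2 := by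
  fin_cases k <;> simp

lemma flt_neBot (k : Fin 3) (x : ℝ) : (flt k x).NeBot := by
  rcases fin3 k with rfl | rfl | rfl <;> simp [flt] <;> infer_instance

lemma lft_tendsto (F : ℝ → ℝ) (hF : Monotone F) (k : Fin 3) (x : ℝ) :
    Tendsto F (flt k x) (𝓝 (lft F k x)) := by
  rcases fin3 k with rfl | rfl | rfl
  · simpa [flt, lft] using hF.tendsto_leftLim x
  · simpa [flt, lft] using tendsto_pure_nhds F x
  · simpa [flt, lft] using hF.tendsto_rightLim x

lemma flt_map (g : ℝ → ℝ) (hm : StrictMono g) (hc : Continuous g) (k : Fin 3) (x : ℝ) :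
    Tendsto g (flt k x) (flt k (g x)) := by
  rcases fin3 k with rfl | rfl | rfl
  · simp only [flt, if_true]
    refine tendsto_nhdsWithin_of_tendsto_nhds_of_eventually_within _
      (hc.continuousAt.tendsto.mono_left nhdsWithin_le_nhds) ?_
    filter_upwards [self_mem_nhdsWithin] with y hy using hm hy
  · simp [flt]
  · have : flt 2 x = 𝓝[>] x := by simp [flt]
    rw [this]
    have : flt 2 (g x) = 𝓝[>] (g x) := by simp [flt]
    rw [this]
    refine tendsto_nhdsWithin_of_tendsto_nhds_of_eventually_within _
      (hc.continuousAt.tendsto.mono_left nhdsWithin_le_nhds) ?_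
    filter_upwards [self_mem_nhdsWithin] with y hy using hm hy

lemma lft_harm {ι : Type*} [Fintype ι] {w m : ι → ℝ} {g : ι → ℝ → ℝ} {B K : ℝ}
    (S : EndSys w m g B K) (F : ℝ → ℝ) (hF : Monotone F) (hQ : ∀ s, ∑ i, w i * F (g i s) = F s)
    (k : Fin 3) (x : ℝ) : ∑ i, w i * lft F k (g i x) = lft F k x := by
  have := flt_neBot k x
  have h1 : Tendsto (fun t => ∑ i, w i * F (g i t)) (flt k x) (𝓝 (∑ i, w i * lft F k (g i x))) :=
    tendsto_finsetSum _ fun i _ => Tendsto.const_mul _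
      ((lft_tendsto F hF k (g i x)).comp (flt_map (g i) (S.mono i) (S.cont i) k x))
  simp only [hQ] at h1
  exact tendsto_nhds_unique h1 (lft_tendsto F hF k x)

lemma lft_mono (F : ℝ → ℝ) (hF : Monotone F) :
    Monotone (fun y : ℝ ×ₗ Fin 3 => lft F (ofLex y).2 (ofLex y).1) := by
  intro a b hab
  rw [Prod.Lex.le_iff] at hab
  change lft F (ofLex a).2 (ofLex a).1 ≤ lft F (ofLex b).2 (ofLex b).1
  generalize (ofLex a).1 = x at *
  generalize (ofLex a).2 = k at *
  generalize (ofLex b).1 = y at *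
  generalize (ofLex b).2 = l at *
  have hub : ∀ k x, lft F k x ≤ rightLim F x := by
    intro k x
    rcases fin3 k with rfl | rfl | rfl
    · simpa [lft] using hF.leftLim_le_rightLim le_rfl
    · simpa [lft] using hF.le_rightLim le_rfl
    · simp [lft]
  have hlb : ∀ k x, leftLim F x ≤ lft F k x := by
    intro k x
    rcases fin3 k with rfl | rfl | rfl
    · simp [lft]
    · simpa [lft] using hF.leftLim_le le_rfl
    · simpa [lft] using hF.leftLim_le_rightLim le_rfl
  rcases hab with h | ⟨rfl, h⟩
  · exact (hub k x).trans ((hF.rightLim_le_leftLim h).trans (hlb l y))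
  · rcases fin3 k with rfl | rfl | rfl
    · simpa [lft] using hlb l x
    · rcases fin3 l with rfl | rfl | rfl
      · simp at h
      · exact le_rfl
      · have e : lft F 2 x = rightLim F x := by simp [lft]
        rw [e]; exact hub 1 x
    · rcases fin3 l with rfl | rfl | rfl
      · simp at h
      · exact absurd h (by decide)
      · exact le_rfl

lemma nhds_flt (x : ℝ) : 𝓝 x = 𝓝[<] x ⊔ (pure x ⊔ 𝓝[>] x) := by
  rw [← nhdsNE_sup_pure, ← nhdsLT_sup_nhdsGT, sup_assoc, sup_comm (𝓝[>] x)]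

lemma attained (H1 H2 : ℝ → ℝ) (h1 : Monotone H1) (h2 : Monotone H2) (R M : ℝ)
    (hM : M ∈ closure ((fun s => H1 s - H2 s) '' Icc (-R) R)) :
    ∃ k x, lft H1 k x - lft H2 k x = M := by
  obtain ⟨u, hu1, hu2⟩ := mem_closure_iff_ultrafilter.1 hM
  set U := Ultrafilter.ofComapInfPrincipal hu1 with hU
  have hU1 : Icc (-R) R ∈ U := Ultrafilter.ofComapInfPrincipal_mem hu1
  have hU2 : Tendsto (fun s => H1 s - H2 s) U (𝓝 M) := by
    have : Ultrafilter.map (fun s => H1 s - H2 s) U = u := Ultrafilter.ofComapInfPrincipal_eq_of_map hu1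
    rw [Tendsto, ← Ultrafilter.coe_map, this]; exact hu2
  obtain ⟨x, -, hx⟩ := isCompact_Icc.ultrafilter_le_nhds U (le_principal_iff.2 hU1)
  have : ∃ k, (U : Filter ℝ) ≤ flt k x := by
    rw [nhds_flt, Ultrafilter.le_sup_iff, Ultrafilter.le_sup_iff] at hx
    rcases hx with h | h | h
    · exact ⟨0, by simpa [flt] using h⟩
    · exact ⟨1, by simpa [flt] using h⟩
    · exact ⟨2, by simpa [flt] using h⟩
  obtain ⟨k, hk⟩ := this
  exact ⟨k, x, tendsto_nhds_unique
    (((lft_tendsto H1 h1 k x).sub (lft_tendsto H2 h2 k x)).mono_left hk) hU2⟩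

lemma sup_cpt {ι : Type*} [Fintype ι] {w mp mm : ι → ℝ} {g : ι → ℝ → ℝ} {B K : ℝ}
    (S : Sys w mp mm g B K) (hp : ∑ i, w i * mp i ≤ 0) (hm : ∑ i, w i * mm i ≤ 0) :
    ∃ R ≥ 0, ∀ (D : ℝ → ℝ) (b T : ℝ), (∀ s, D s ≤ b) → (∀ s, ∑ i, w i * D (g i s) = D s) →
      (∀ s ∈ Icc (-R) R, D s ≤ T) → ∀ s, D s ≤ T := by
  obtain ⟨R1, h1⟩ := rlemma S.plus hp
  obtain ⟨R2, h2⟩ := rlemma S.minus hm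
  have hK := S.plus.hK
  set R := max (max R1 R2) K with hR
  have hR1 : R1 ≤ R := (le_max_left _ _).trans (le_max_left _ _)
  have hR2 : R2 ≤ R := (le_max_right _ _).trans (le_max_left _ _)
  have hRK : K ≤ R := le_max_right _ _
  refine ⟨R, by linarith, fun D b T hb hQ hT s => ?_⟩
  rcases le_or_gt R s with h | h
  · exact h1 R hR1 D b T hb (fun s => (hQ s).ge) (fun t ht ht' => hT t ⟨by linarith, ht'⟩) s h
  rcases le_or_gt R (-s) with h' | h'
  · have := h2 R hR2 (fun t => D (-t)) b T (fun t => hb _)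
      (fun t => by simp only [neg_neg]; exact (hQ (-t)).ge)
      (fun t ht ht' => hT _ ⟨by linarith, by linarith⟩) (-s) h'
    simpa using this
  · exact hT s ⟨by linarith, h.le⟩

lemma liou_crit {ι : Type*} [Fintype ι] {w mp mm : ι → ℝ} {g : ι → ℝ → ℝ} {B K : ℝ}
    (S : Sys w mp mm g B K) (hp : ∑ i, w i * mp i ≤ 0) (hm : ∑ i, w i * mm i ≤ 0)
    (H1 H2 : ℝ → ℝ) (h1 : Monotone H1) (h2 : Monotone H2)
    (hQ1 : ∀ s, ∑ i, w i * H1 (g i s) = H1 s) (hQ2 : ∀ s, ∑ i, w i * H2 (g i s) = H2 s)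
    (b : ℝ) (hb : ∀ s, |H1 s - H2 s| ≤ b) : ∃ c, ∀ s, H1 s - H2 s = c := by
  obtain ⟨R, hR, hRs⟩ := sup_cpt S hp hm
  set D : ℝ → ℝ := fun s => H1 s - H2 s with hD
  have hQD : ∀ y, ∑ i, w i * D (g i y) = D y := by
    intro y
    simp only [hD]
    rw [← hQ1 y, ← hQ2 y, ← Finset.sum_sub_distrib]
    exact Finset.sum_congr rfl fun i _ => by ring
  have hne : (D '' Icc (-R) R).Nonempty := Set.Nonempty.image _ ⟨0, by linarith, hR⟩
  have hba : BddAbove (D '' Icc (-R) R) := ⟨b, by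
    rintro _ ⟨s, -, rfl⟩; exact (abs_le.1 (hb s)).2⟩
  have hbb : BddBelow (D '' Icc (-R) R) := ⟨-b, by
    rintro _ ⟨s, -, rfl⟩; exact (abs_le.1 (hb s)).1⟩
  set M := sSup (D '' Icc (-R) R) with hM
  set m := sInf (D '' Icc (-R) R) with hm'
  have hMub : ∀ s, D s ≤ M := hRs D b M (fun s => (abs_le.1 (hb s)).2) hQD
    fun s hs => le_csSup hba ⟨s, hs, rfl⟩
  have hmlb : ∀ s, m ≤ D s := by
    intro s
    have := hRs (fun s => -D s) b (-m) (fun s => by have := (abs_le.1 (hb s)).1; simp only [hD]; linarith)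
      (fun s => by simp only [mul_neg, Finset.sum_neg_distrib]; rw [hQD])
      (fun s hs => neg_le_neg (csInf_le hbb ⟨s, hs, rfl⟩)) s
    linarith
  rcases eq_or_lt_of_le ((hmlb 0).trans (hMub 0)) with he | hlt
  · exact ⟨M, fun s => le_antisymm (hMub s) (he ▸ hmlb s)⟩
  exfalso
  obtain ⟨k, x, hkx⟩ := attained H1 H2 h1 h2 R M (csSup_mem_closure hne hba)
  obtain ⟨l, y, hly⟩ := attained H1 H2 h1 h2 R m (csInf_mem_closure hne hbb)
  refine core S (Y := ℝ ×ₗ Fin 3) (fun i y => toLex (g i (ofLex y).1, (ofLex y).2))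
    (fun y => (ofLex y).1) ?_ ?_ ?_
    (fun y => lft H1 (ofLex y).2 (ofLex y).1) (fun y => lft H2 (ofLex y).2 (ofLex y).1)
    (lft_mono H1 h1) (lft_mono H2 h2)
    (fun y => lft_harm S.plus H1 h1 hQ1 _ _) (fun y => lft_harm S.plus H2 h2 hQ2 _ _)
    m M hlt ?_ ⟨toLex (x, k), hkx⟩ ⟨toLex (y, l), hly⟩
  · intro a b hab
    rw [Prod.Lex.le_iff] at hab
    rcases hab with h | h
    · exact h.le
    · exact h.1.le
  · intro i a b hab
    rw [Prod.Lex.le_iff] at hab ⊢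
    rcases hab with h | h
    · exact Or.inl (S.plus.mono i h)
    · exact Or.inr ⟨congrArg (g i) h.1, h.2⟩
  · intro i x; rfl
  · intro y
    have := flt_neBot (ofLex y).2 (ofLex y).1
    have ht := (lft_tendsto H1 h1 (ofLex y).2 (ofLex y).1).sub (lft_tendsto H2 h2 (ofLex y).2 (ofLex y).1)
    exact ⟨ge_of_tendsto ht (Eventually.of_forall hmlb), le_of_tendsto ht (Eventually.of_forall hMub)⟩

end IDU

namespace IDU

/-- negation of harmonic monotone functions -/
lemma neg_harm {ι : Type*} [Fintype ι] {w : ι → ℝ} {g : ι → ℝ → ℝ} (F : ℝ → ℝ)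
    (hQ : ∀ s, ∑ i, w i * F (g i s) = F s) :
    ∀ s, ∑ i, w i * (fun t => -F (-t)) ((fun i s => -g i (-s)) i s) = (fun t => -F (-t)) s := by
  intro s
  simp only [neg_neg, mul_neg, Finset.sum_neg_distrib]
  rw [hQ]

lemma neg_mono (F : ℝ → ℝ) (hF : Monotone F) : Monotone (fun t => -F (-t)) :=
  fun x y h => neg_le_neg (hF (neg_le_neg h))

lemma sub_harm {ι : Type*} [Fintype ι] {w : ι → ℝ} {g : ι → ℝ → ℝ} (H1 H2 : ℝ → ℝ)
    (hQ1 : ∀ s, ∑ i, w i * H1 (g i s) = H1 s) (hQ2 : ∀ s, ∑ i, w i * H2 (g i s) = H2 s) :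
    ∀ s, ∑ i, w i * (fun t => H1 t - H2 t) (g i s) = (fun t => H1 t - H2 t) s := by
  intro y
  simp only
  rw [← hQ1 y, ← hQ2 y, ← Finset.sum_sub_distrib]
  exact Finset.sum_congr rfl fun i _ => by ring

lemma czero_aux {ι : Type*} [Fintype ι] {w m : ι → ℝ} {g : ι → ℝ → ℝ} {B K : ℝ}
    (S : EndSys w m g B K) (F : ℝ → ℝ) (hF : Monotone F) (c : ℝ)
    (hQ : ∀ s, ∑ i, w i * F (g i s) = F s + c) : 0 ≤ c := by
  by_contra hc
  push Not at hc
  refine claim1 S g id (fun _ _ => rfl) univ (fun _ _ _ => trivial)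
    (fun r => ⟨r + 1, trivial, by simp⟩) F 0 (-F (0 - K)) (-c) (by linarith) ?_ ?_
  · intro x _ hx
    rw [neg_neg]; exact hF hx
  · intro x _ _
    rw [hQ]; linarith

lemma czero {ι : Type*} [Fintype ι] {w mp mm : ι → ℝ} {g : ι → ℝ → ℝ} {B K : ℝ}
    (S : Sys w mp mm g B K) (F : ℝ → ℝ) (hF : Monotone F) (c : ℝ)
    (hQ : ∀ s, ∑ i, w i * F (g i s) = F s + c) : c = 0 := by
  apply le_antisymm
  · have := czero_aux S.minus (fun t => -F (-t)) (neg_mono F hF) (-c) (fun s => by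
      simp only [neg_neg, mul_neg, Finset.sum_neg_distrib]
      rw [hQ]; ring)
    linarith
  · exact czero_aux S.plus F hF c hQ

lemma liou_one {ι : Type*} [Fintype ι] {w mp mm : ι → ℝ} {g : ι → ℝ → ℝ} {B K : ℝ}
    (S : Sys w mp mm g B K) (D : ℝ → ℝ) (b d : ℝ) (hb : ∀ s, D s ≤ b)
    (hQ : ∀ s, ∑ i, w i * D (g i s) = D s) (htop : Tendsto D atTop (𝓝 d))
    (hbot : ∑ i, w i * mm i ≤ 0 ∨ Tendsto D atBot (𝓝 d)) : ∀ s, D s ≤ d := by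
  intro s
  apply le_of_forall_pos_le_add
  intro ε hε
  obtain ⟨T, hT⟩ := eventually_atTop.1 (htop.eventually (eventually_le_nhds (show d < d + ε by linarith)))
  have hQ' : ∀ s, D s - (d + ε) ≤ ∑ i, w i * (D (g i s) - (d + ε)) := by
    intro s
    simp only [mul_sub, Finset.sum_sub_distrib]
    rw [hQ, ← Finset.sum_mul, S.plus.hw1]; linarith
  have hK := S.plus.hK
  rcases hbot with hm | hbot
  · obtain ⟨R0, hR0⟩ := rlemma S.minus hm
    set R := max R0 (-s)
    set e := max (max s T) (-R + K)
    have := exitL' S.plus (-R) e (fun t => D t - (d + ε)) (b - (d + ε))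
      (fun t _ => by have := hb t; linarith) (fun t _ => hQ' t) ?_ ?_ s
      ⟨by have := le_max_right R0 (-s); linarith, (le_max_left _ _).trans (le_max_left _ _)⟩
    · linarith
    · intro t ht i hi
      have := hT (g i t) (((le_max_right _ _).trans (le_max_left _ _)).trans hi.le)
      linarith
    · intro T' hT' hle t ht i hi
      have := hR0 R (le_max_left _ _) (fun t => D (-t)) b (T' + (d + ε)) (fun t => hb _)
        (fun t => by simp only [neg_neg]; exact (hQ (-t)).ge)
        (fun t h1 h2 => by
          have := hle (-t) ⟨by linarith, by have := le_max_right (max s T) (-R + K); linarith⟩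
          linarith) (-(g i t)) (by linarith)
      simp only [neg_neg] at this
      linarith
  · obtain ⟨T2, hT2⟩ := eventually_atBot.1 (hbot.eventually (eventually_le_nhds (show d < d + ε by linarith)))
    have := exitL S.plus (min s T2) (max s T) (fun t => D t - (d + ε)) (b - (d + ε))
      (fun t _ => by have := hb t; linarith) (fun t _ => hQ' t) ?_ ?_ s
      ⟨min_le_left _ _, le_max_left _ _⟩
    · linarith
    · intro t ht i hi
      have := hT (g i t) ((le_max_right _ _).trans hi.le)
      linarith
    · intro t ht i hi
      have := hT2 (g i t) (hi.le.trans (min_le_right _ _))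
      linarith

lemma liou_one_eq {ι : Type*} [Fintype ι] {w mp mm : ι → ℝ} {g : ι → ℝ → ℝ} {B K : ℝ}
    (S : Sys w mp mm g B K) (D : ℝ → ℝ) (b d : ℝ) (hb : ∀ s, |D s| ≤ b)
    (hQ : ∀ s, ∑ i, w i * D (g i s) = D s) (htop : Tendsto D atTop (𝓝 d))
    (hbot : ∑ i, w i * mm i ≤ 0 ∨ Tendsto D atBot (𝓝 d)) : ∀ s, D s = d := by
  intro s
  apply le_antisymm (liou_one S D b d (fun s => (abs_le.1 (hb s)).2) hQ htop hbot s)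
  have := liou_one S (fun s => -D s) b (-d) (fun s => by have := (abs_le.1 (hb s)).1; linarith)
    (fun s => by simp only [mul_neg, Finset.sum_neg_distrib]; rw [hQ]) htop.neg
    (hbot.imp id fun h => h.neg) s
  linarith

lemma window2 {ι : Type*} [Fintype ι] {w mp mm : ι → ℝ} {g : ι → ℝ → ℝ} {B K : ℝ}
    (S : Sys w mp mm g B K) (F : ℝ → ℝ) (hF : Monotone F)
    (hQ : ∀ s, ∑ i, w i * F (g i s) = F s) : ∃ b, 0 ≤ b ∧ ∀ s, F (s + K) - F s ≤ b := by
  obtain ⟨b1, h1⟩ := (window S.plus F hF hQ).1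
  obtain ⟨b2, h2⟩ := (window S.minus _ (neg_mono F hF) (neg_harm F hQ)).1
  have hK := S.plus.hK
  refine ⟨max (max b1 b2) (max (F K - F (-K)) 0), le_max_of_le_right (le_max_right _ _), fun s => ?_⟩
  rcases le_total 0 s with h | h
  · exact (h1 s h).trans ((le_max_left _ _).trans (le_max_left _ _))
  rcases le_total s (-K) with h' | h'
  · have := h2 (-s - K) (by linarith)
    have e1 : -(-s - K + K) = s := by ring
    have e2 : -(-s - K) = s + K := by ring
    simp only [e1, e2] at this
    refine le_trans ?_ ((le_max_right _ _).trans (le_max_left _ _))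
    linarith
  · refine le_trans ?_ ((le_max_left _ _).trans (le_max_right _ _))
    have a1 := hF (show s + K ≤ K by linarith)
    have a2 := hF h'
    linarith

/-- one-sided bound for the normalised difference on `[-n,n]` -/
lemma dn_bound {ι : Type*} [Fintype ι] {w m : ι → ℝ} {g : ι → ℝ → ℝ} {B K : ℝ}
    (S : EndSys w m g B K) (F1 F2 : ℝ → ℝ) (h1 : Monotone F1) (h2 : Monotone F2)
    (hQ1 : ∀ s, ∑ i, w i * F1 (g i s) = F1 s) (hQ2 : ∀ s, ∑ i, w i * F2 (g i s) = F2 s)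
    (b : ℝ) (hb0 : 0 ≤ b) (hb1 : ∀ s, F1 (s + K) - F1 s ≤ b) (hb2 : ∀ s, F2 (s + K) - F2 s ≤ b)
    (α β n : ℝ) (hα : 0 ≤ α) (hβ : 0 ≤ β) (hαβ : α + β = 1)
    (heq : α * (F1 n - F1 (-n)) = β * (F2 n - F2 (-n))) :
    ∀ s ∈ Icc (-n) n, α * (F1 s - F1 (-n)) - β * (F2 s - F2 (-n)) ≤ b := by
  have hαb : α * b ≤ b := mul_le_of_le_one_left hb0 (by linarith)
  have hβb : β * b ≤ b := mul_le_of_le_one_left hb0 (by linarith)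
  have := exitL S (-n) n (fun s => α * (F1 s - F1 (-n)) - β * (F2 s - F2 (-n)) - b)
    (α * (F1 n - F1 (-n)) - b) ?_ ?_ ?_ ?_
  · intro s hs
    have := this s hs
    linarith
  · intro s hs
    have a1 := mul_le_mul_of_nonneg_left (sub_le_sub_right (h1 hs.2) (F1 (-n))) hα
    have a2 := mul_nonneg hβ (sub_nonneg.2 (h2 hs.1))
    linarith
  · intro s hs
    have : ∑ i, w i * (α * (F1 (g i s) - F1 (-n)) - β * (F2 (g i s) - F2 (-n)) - b)
        = α * ∑ i, w i * F1 (g i s) - β * ∑ i, w i * F2 (g i s)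
          + (∑ i, w i) * (-α * F1 (-n) + β * F2 (-n) - b) := by
      rw [Finset.sum_mul, Finset.mul_sum, Finset.mul_sum, ← Finset.sum_sub_distrib,
        ← Finset.sum_add_distrib]
      exact Finset.sum_congr rfl fun i _ => by ring
    rw [this, hQ1, hQ2, S.hw1]
    apply le_of_eq; ring
  · intro s hs i hi
    have e1 : g i s ≤ n + K := by have := S.le_add i s; have := hs.2; linarith
    have a1 := h1 e1
    have a2 := hb1 n
    have a3 := h2 hi.le
    have a4 : α * (F1 (g i s) - F1 n) ≤ α * b := mul_le_mul_of_nonneg_left (by linarith) hα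
    have a5 := mul_nonneg hβ (sub_nonneg.2 a3)
    nlinarith
  · intro s hs i hi
    have e1 : -n - K ≤ g i s := by have := S.ge_sub i s; have := hs.1; linarith
    have a1 := h2 e1
    have a2 := hb2 (-n - K)
    rw [sub_add_cancel] at a2
    have a3 := h1 hi.le
    have a4 : β * (F2 (-n) - F2 (g i s)) ≤ β * b := mul_le_mul_of_nonneg_left (by linarith) hβ
    have a5 := mul_nonneg hα (sub_nonneg.2 a3)
    nlinarith

lemma norm_coef (a b : ℝ) (ha : 0 ≤ a) (hb : 0 ≤ b) :
    ∃ α β : ℝ, 0 ≤ α ∧ 0 ≤ β ∧ α + β = 1 ∧ α * a = β * b := by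
  rcases (add_nonneg ha hb).eq_or_lt with h | h
  · refine ⟨1, 0, zero_le_one, le_rfl, by ring, ?_⟩
    have : a = 0 := by linarith
    rw [this]; ring
  · refine ⟨b / (a + b), a / (a + b), by positivity, by positivity, ?_, by ring⟩
    field_simp; ring

lemma bddD {ι : Type*} [Fintype ι] {w mp mm : ι → ℝ} {g : ι → ℝ → ℝ} {B K : ℝ}
    (S : Sys w mp mm g B K) (F1 F2 : ℝ → ℝ) (h1 : Monotone F1) (h2 : Monotone F2)
    (hQ1 : ∀ s, ∑ i, w i * F1 (g i s) = F1 s) (hQ2 : ∀ s, ∑ i, w i * F2 (g i s) = F2 s) :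
    ∃ α β : ℝ, 0 ≤ α ∧ 0 ≤ β ∧ α + β = 1 ∧ ∃ b, ∀ s, |α * F1 s - β * F2 s| ≤ b := by
  obtain ⟨b1, hb10, hb1⟩ := window2 S F1 h1 hQ1
  obtain ⟨b2, hb20, hb2⟩ := window2 S F2 h2 hQ2
  set b := max b1 b2
  have hb0 : 0 ≤ b := hb10.trans (le_max_left _ _)
  have hb1' : ∀ s, F1 (s + K) - F1 s ≤ b := fun s => (hb1 s).trans (le_max_left _ _)
  have hb2' : ∀ s, F2 (s + K) - F2 s ≤ b := fun s => (hb2 s).trans (le_max_right _ _)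
  have hex : ∀ n : ℕ, ∃ α : ℝ, α ∈ Icc (0:ℝ) 1 ∧ ∀ s ∈ Icc (-(n:ℝ)) n,
      |α * (F1 s - F1 0) - (1 - α) * (F2 s - F2 0)| ≤ 2 * b := by
    intro n
    have hn : -(n:ℝ) ≤ n := by have : (0:ℝ) ≤ n := n.cast_nonneg
                               linarith
    obtain ⟨α, β, hα, hβ, hαβ, heq⟩ := norm_coef (F1 n - F1 (-n)) (F2 n - F2 (-n))
      (sub_nonneg.2 (h1 hn)) (sub_nonneg.2 (h2 hn))
    refine ⟨α, ⟨hα, by linarith⟩, fun s hs => ?_⟩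
    have hβe : 1 - α = β := by linarith
    rw [hβe]
    have c1 := dn_bound S.plus F1 F2 h1 h2 hQ1 hQ2 b hb0 hb1' hb2' α β n hα hβ hαβ heq
    have c2 := dn_bound S.plus F2 F1 h2 h1 hQ2 hQ1 b hb0 hb2' hb1' β α n hβ hα (by linarith) heq.symm
    have h0 : (0:ℝ) ∈ Icc (-(n:ℝ)) n := ⟨by simp, by simp⟩
    have d1 := c1 s hs
    have d2 := c2 s hs
    have d3 := c1 0 h0
    have d4 := c2 0 h0
    rw [abs_le]
    constructor <;> nlinarith
  choose α hα hαs using hex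
  obtain ⟨a, ha, φ, hφ, hlim⟩ := isCompact_Icc.tendsto_subseq hα
  refine ⟨a, 1 - a, ha.1, by linarith [ha.2], by ring, 2 * b + |a * F1 0 - (1 - a) * F2 0|, fun s => ?_⟩
  have key : |a * (F1 s - F1 0) - (1 - a) * (F2 s - F2 0)| ≤ 2 * b := by
    have ht : Tendsto (fun n => |α (φ n) * (F1 s - F1 0) - (1 - α (φ n)) * (F2 s - F2 0)|) atTop
        (𝓝 |a * (F1 s - F1 0) - (1 - a) * (F2 s - F2 0)|) := by
      have hl : Tendsto (fun n => α (φ n)) atTop (𝓝 a) := hlim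
      exact ((hl.mul_const _).sub ((hl.const_sub 1).mul_const _)).abs
    obtain ⟨N, hN⟩ := exists_nat_ge |s|
    refine le_of_tendsto ht (eventually_atTop.2 ⟨N, fun n hn => hαs (φ n) s ?_⟩)
    have : (N:ℝ) ≤ (φ n : ℝ) := by exact_mod_cast hn.trans (hφ.id_le n)
    exact abs_le.1 (hN.trans this)
  have e : a * F1 s - (1 - a) * F2 s = (a * (F1 s - F1 0) - (1 - a) * (F2 s - F2 0))
      + (a * F1 0 - (1 - a) * F2 0) := by ring
  rw [e]
  exact (abs_add_le _ _).trans (by linarith)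

lemma mul_harm {ι : Type*} [Fintype ι] {w : ι → ℝ} {g : ι → ℝ → ℝ} (F : ℝ → ℝ) (α : ℝ)
    (hQ : ∀ s, ∑ i, w i * F (g i s) = F s) :
    ∀ s, ∑ i, w i * (fun t => α * F t) (g i s) = (fun t => α * F t) s := by
  intro s
  simp only
  rw [← hQ s, Finset.mul_sum]
  exact Finset.sum_congr rfl fun i _ => by ring

lemma mono_lim_top (F : ℝ → ℝ) (hF : Monotone F) (b : ℝ) (hb : ∀ s, F s ≤ b) :
    ∃ l, Tendsto F atTop (𝓝 l) :=
  ⟨_, tendsto_atTop_ciSup hF ⟨b, by rintro _ ⟨s, rfl⟩; exact hb s⟩⟩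

/-- one strict end at `+∞`, critical at `-∞` -/
lemma liou_pm {ι : Type*} [Fintype ι] {w mp mm : ι → ℝ} {g : ι → ℝ → ℝ} {B K : ℝ}
    (S : Sys w mp mm g B K) (F1 F2 : ℝ → ℝ) (h1 : Monotone F1) (h2 : Monotone F2)
    (hQ1 : ∀ s, ∑ i, w i * F1 (g i s) = F1 s) (hQ2 : ∀ s, ∑ i, w i * F2 (g i s) = F2 s)
    (hp : 0 < ∑ i, w i * mp i) (hm : ∑ i, w i * mm i ≤ 0) :
    ∃ α β : ℝ, 0 ≤ α ∧ 0 ≤ β ∧ α + β = 1 ∧ ∃ c, ∀ s, α * F1 s - β * F2 s = c := by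
  obtain ⟨α, β, hα, hβ, hαβ, b, hb⟩ := bddD S F1 F2 h1 h2 hQ1 hQ2
  obtain ⟨b1, hb1⟩ := (window S.plus F1 h1 hQ1).2 hp
  obtain ⟨b2, hb2⟩ := (window S.plus F2 h2 hQ2).2 hp
  obtain ⟨l1, hl1⟩ := mono_lim_top F1 h1 b1 hb1
  obtain ⟨l2, hl2⟩ := mono_lim_top F2 h2 b2 hb2
  exact ⟨α, β, hα, hβ, hαβ, _, liou_one_eq S (fun s => α * F1 s - β * F2 s) b _ hb
    (sub_harm (fun s => α * F1 s) (fun s => β * F2 s) (mul_harm F1 α hQ1) (mul_harm F2 β hQ2))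
    ((hl1.const_mul α).sub (hl2.const_mul β)) (Or.inl hm)⟩

theorem liouville {ι : Type*} [Fintype ι] {w mp mm : ι → ℝ} {g : ι → ℝ → ℝ} {B K : ℝ}
    (S : Sys w mp mm g B K) (F1 F2 : ℝ → ℝ) (h1 : Monotone F1) (h2 : Monotone F2)
    (hQ1 : ∀ s, ∑ i, w i * F1 (g i s) = F1 s) (hQ2 : ∀ s, ∑ i, w i * F2 (g i s) = F2 s) :
    ∃ α β : ℝ, 0 ≤ α ∧ 0 ≤ β ∧ α + β = 1 ∧ ∃ c, ∀ s, α * F1 s - β * F2 s = c := by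
  rcases S.plus.hm.eq_or_lt with hp | hp
  · rcases S.minus.hm.eq_or_lt with hm | hm
    · obtain ⟨α, β, hα, hβ, hαβ, b, hb⟩ := bddD S F1 F2 h1 h2 hQ1 hQ2
      exact ⟨α, β, hα, hβ, hαβ, liou_crit S hp.ge hm.ge (fun s => α * F1 s) (fun s => β * F2 s)
        (h1.const_mul hα) (h2.const_mul hβ) (mul_harm F1 α hQ1) (mul_harm F2 β hQ2) b hb⟩
    · obtain ⟨α, β, hα, hβ, hαβ, c, hc⟩ := liou_pm S.neg _ _ (neg_mono F1 h1) (neg_mono F2 h2)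
        (neg_harm F1 hQ1) (neg_harm F2 hQ2) hm hp.ge
      refine ⟨α, β, hα, hβ, hαβ, -c, fun s => ?_⟩
      have := hc (-s)
      simp only [neg_neg] at this
      linarith
  · rcases S.minus.hm.eq_or_lt with hm | hm
    · exact liou_pm S F1 F2 h1 h2 hQ1 hQ2 hp hm.ge
    · obtain ⟨b1, hb1⟩ := (window S.plus F1 h1 hQ1).2 hp
      obtain ⟨b2, hb2⟩ := (window S.plus F2 h2 hQ2).2 hp
      obtain ⟨b1', hb1'⟩ := (window S.minus _ (neg_mono F1 h1) (neg_harm F1 hQ1)).2 hm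
      obtain ⟨b2', hb2'⟩ := (window S.minus _ (neg_mono F2 h2) (neg_harm F2 hQ2)).2 hm
      obtain ⟨l1, hl1⟩ := mono_lim_top F1 h1 b1 hb1
      obtain ⟨l2, hl2⟩ := mono_lim_top F2 h2 b2 hb2
      obtain ⟨k1, hk1⟩ := mono_lim_top _ (neg_mono F1 h1) b1' hb1'
      obtain ⟨k2, hk2⟩ := mono_lim_top _ (neg_mono F2 h2) b2' hb2'
      have hk1' : Tendsto F1 atBot (𝓝 (-k1)) := by
        have := (hk1.comp tendsto_neg_atBot_atTop).neg
        simpa [comp_def] using this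
      have hk2' : Tendsto F2 atBot (𝓝 (-k2)) := by
        have := (hk2.comp tendsto_neg_atBot_atTop).neg
        simpa [comp_def] using this
      have e1 : 0 ≤ l1 - -k1 := sub_nonneg.2
        ((h1.le_of_tendsto hk1' 0).trans (h1.ge_of_tendsto hl1 0))
      have e2 : 0 ≤ l2 - -k2 := sub_nonneg.2
        ((h2.le_of_tendsto hk2' 0).trans (h2.ge_of_tendsto hl2 0))
      obtain ⟨α, β, hα, hβ, hαβ, heq⟩ := norm_coef _ _ e1 e2
      refine ⟨α, β, hα, hβ, hαβ, _, liou_one_eq S (fun s => α * F1 s - β * F2 s)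
        (α * (|b1| + |b1'|) + β * (|b2| + |b2'|)) _ ?_
        (sub_harm (fun s => α * F1 s) (fun s => β * F2 s) (mul_harm F1 α hQ1) (mul_harm F2 β hQ2))
        ((hl1.const_mul α).sub (hl2.const_mul β)) (Or.inr ?_)⟩
      · intro s
        have a : ∀ (F : ℝ → ℝ) (b b' : ℝ), (∀ s, F s ≤ b) → (∀ s, -F (-s) ≤ b') → |F s| ≤ |b| + |b'| := by
          intro F b b' h h'
          have x1 := h s
          have x2 := h' (-s)
          rw [neg_neg] at x2
          rw [abs_le]
          constructor <;>
          linarith [le_abs_self b, le_abs_self b', abs_nonneg b, abs_nonneg b']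
        have a1 := a F1 b1 b1' hb1 hb1'
        have a2 := a F2 b2 b2' hb2 hb2'
        calc |α * F1 s - β * F2 s| ≤ |α * F1 s| + |β * F2 s| := abs_sub _ _
          _ = α * |F1 s| + β * |F2 s| := by rw [abs_mul, abs_mul, abs_of_nonneg hα, abs_of_nonneg hβ]
          _ ≤ _ := add_le_add (mul_le_mul_of_nonneg_left a1 hα) (mul_le_mul_of_nonneg_left a2 hβ)
      · have : α * l1 - β * l2 = α * (-k1) - β * (-k2) := by linarith
        rw [this]
        exact (hk1'.const_mul α).sub (hk2'.const_mul β)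

end IDU

namespace IDU

def InvR {ι : Type*} [Fintype ι] (e : ι → ℝ ≃o ℝ) (w : ι → ℝ) (ν : Measure ℝ) : Prop :=
  ∀ f : ℝ → ℝ, Continuous f → HasCompactSupport f →
    ∫ x, f x ∂ν = ∑ i : ι, w i * ∫ x, f (e i x) ∂ν

theorem map_lf (e : ℝ ≃o ℝ) (ν : Measure ℝ) [IsLocallyFiniteMeasure ν] (c : ℝ≥0∞) (hc : c ≠ ⊤)
    (K : Set ℝ) (hK : IsCompact K) : (c • ν.map e) K < ⊤ := by
  rw [Measure.smul_apply, Measure.map_apply e.continuous.measurable hK.measurableSet]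
  have : IsCompact (e ⁻¹' K) := by
    have := e.toHomeomorph.isCompact_preimage.2 hK
    simpa using this
  exact ENNReal.mul_lt_top hc.lt_top this.measure_lt_top

theorem inv_meas {ι : Type*} [Fintype ι] (e : ι → ℝ ≃o ℝ) (w : ι → ℝ) (hw : ∀ i, 0 < w i)
    (ν : Measure ℝ) [IsLocallyFiniteMeasure ν] (hν : InvR e w ν) :
    ν = ∑ i, ENNReal.ofReal (w i) • ν.map (e i) := by
  have fc : IsFiniteMeasureOnCompacts (∑ i, ENNReal.ofReal (w i) • ν.map (e i)) := by
    constructor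
    intro K hK
    rw [Measure.finsetSum_apply]
    exact ENNReal.sum_lt_top.2 fun i _ => map_lf (e i) ν _ ENNReal.ofReal_ne_top K hK
  have hlf : IsLocallyFiniteMeasure (∑ i, ENNReal.ofReal (w i) • ν.map (e i)) :=
    isLocallyFiniteMeasure_of_isFiniteMeasureOnCompacts
  apply Measure.ext_of_integral_eq_on_compactlySupported
  intro f
  rw [hν f f.continuous f.hasCompactSupport, integral_finsetSum_measure]
  · refine Finset.sum_congr rfl fun i _ => ?_
    rw [integral_smul_measure, ENNReal.toReal_ofReal (hw i).le, smul_eq_mul,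
      integral_map (f := fun x => f x) (e i).continuous.measurable.aemeasurable
        f.continuous_toFun.aestronglyMeasurable]
  · intro i _
    have : IsFiniteMeasureOnCompacts (ENNReal.ofReal (w i) • ν.map (e i)) :=
      ⟨fun K hK => map_lf (e i) ν _ ENNReal.ofReal_ne_top K hK⟩
    exact f.continuous.integrable_of_hasCompactSupport f.hasCompactSupport

theorem inv_Ioc {ι : Type*} [Fintype ι] (e : ι → ℝ ≃o ℝ) (w : ι → ℝ) (hw : ∀ i, 0 < w i)
    (ν : Measure ℝ) [IsLocallyFiniteMeasure ν] (hν : InvR e w ν) (x y : ℝ) :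
    ν.real (Ioc x y) = ∑ i, w i * ν.real (Ioc ((e i).symm x) ((e i).symm y)) := by
  conv_lhs => rw [measureReal_def, inv_meas e w hw ν hν, Measure.finsetSum_apply]
  rw [ENNReal.toReal_sum]
  · refine Finset.sum_congr rfl fun i _ => ?_
    rw [Measure.smul_apply, Measure.map_apply (e i).continuous.measurable measurableSet_Ioc,
      OrderIso.preimage_Ioc, smul_eq_mul, ENNReal.toReal_mul, ENNReal.toReal_ofReal (hw i).le]
    rfl
  · intro i _
    have := map_lf (e i) ν _ (ENNReal.ofReal_ne_top (r := w i)) (Icc x y) isCompact_Icc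
    exact ((measure_mono Ioc_subset_Icc_self).trans_lt this).ne

theorem exists_F (ν : Measure ℝ) [IsLocallyFiniteMeasure ν] :
    ∃ F : ℝ → ℝ, Monotone F ∧ ∀ x y, x ≤ y → F y - F x = ν.real (Ioc x y) := by
  have key : ∀ x y : ℝ, x ≤ y → (∫ t in (0:ℝ)..y, (1:ℝ) ∂ν) - (∫ t in (0:ℝ)..x, (1:ℝ) ∂ν) = ν.real (Ioc x y) := by
    intro x y hxy
    have hI : ∀ a b : ℝ, IntervalIntegrable (fun _ => (1:ℝ)) ν a b := fun a b =>
      continuous_const.intervalIntegrable a b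
    rw [intervalIntegral.integral_interval_sub_left (hI _ _) (hI _ _),
      intervalIntegral.integral_of_le hxy]
    simp
  refine ⟨_, fun x y hxy => ?_, key⟩
  have := key x y hxy
  have h0 : 0 ≤ ν.real (Ioc x y) := measureReal_nonneg
  linarith

theorem exists_harm {ι : Type*} [Fintype ι] (e : ι → ℝ ≃o ℝ) {w mp mm : ι → ℝ} {B K : ℝ}
    (S : Sys w mp mm (fun i => (e i).symm) B K)
    (ν : Measure ℝ) [IsLocallyFiniteMeasure ν] (hν : InvR e w ν) :
    ∃ F : ℝ → ℝ, Monotone F ∧ (∀ s, ∑ i, w i * F ((e i).symm s) = F s) ∧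
      ∀ x y, x ≤ y → F y - F x = ν.real (Ioc x y) := by
  obtain ⟨F, hF, hFν⟩ := exists_F ν
  refine ⟨F, hF, ?_, hFν⟩
  have hdiff : ∀ x y, x ≤ y → (∑ i, w i * F ((e i).symm y)) - (∑ i, w i * F ((e i).symm x)) = F y - F x := by
    intro x y hxy
    rw [hFν x y hxy, inv_Ioc e w S.plus.hw ν hν, ← Finset.sum_sub_distrib]
    refine Finset.sum_congr rfl fun i _ => ?_
    rw [← hFν _ _ ((e i).symm.monotone hxy)]; ring
  have hc : ∀ s, ∑ i, w i * F ((e i).symm s) = F s + ((∑ i, w i * F ((e i).symm 0)) - F 0) := by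
    intro s
    rcases le_total 0 s with h | h
    · have := hdiff _ _ h; linarith
    · have := hdiff _ _ h; linarith
  have h0 := czero S F hF _ hc
  intro s
  rw [hc s, h0, add_zero]

theorem uniqR {ι : Type*} [Fintype ι] (e : ι → ℝ ≃o ℝ) {w mp mm : ι → ℝ} {B K : ℝ}
    (S : Sys w mp mm (fun i => (e i).symm) B K)
    (ν₁ ν₂ : Measure ℝ) [IsLocallyFiniteMeasure ν₁] [IsLocallyFiniteMeasure ν₂]
    (h1 : InvR e w ν₁) (h2 : InvR e w ν₂) (n1 : ν₁ ≠ 0) (n2 : ν₂ ≠ 0) :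
    ∃ C : ℝ≥0, 0 < C ∧ ν₁ = C • ν₂ := by
  obtain ⟨F1, m1, q1, d1⟩ := exists_harm e S ν₁ h1
  obtain ⟨F2, m2, q2, d2⟩ := exists_harm e S ν₂ h2
  obtain ⟨α, β, hα, hβ, hαβ, c, hc⟩ := liouville S F1 F2 m1 m2 q1 q2
  have hlf : IsLocallyFiniteMeasure (α.toNNReal • ν₁) := inferInstance
  have heq : α.toNNReal • ν₁ = β.toNNReal • ν₂ := by
    apply Measure.ext_of_Ioc
    intro a b hab
    have e1 := d1 a b hab.le
    have e2 := d2 a b hab.le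
    have f1 : ν₁ (Ioc a b) ≠ ⊤ := measure_Ioc_lt_top.ne
    have f2 : ν₂ (Ioc a b) ≠ ⊤ := measure_Ioc_lt_top.ne
    rw [Measure.smul_apply, Measure.smul_apply, ← ENNReal.ofReal_toReal f1, ← ENNReal.ofReal_toReal f2]
    change ENNReal.ofReal α * _ = ENNReal.ofReal β * _
    rw [← ENNReal.ofReal_mul hα, ← ENNReal.ofReal_mul hβ]
    congr 1
    change α * ν₁.real _ = β * ν₂.real _
    rw [← e1, ← e2]
    have := hc a; have := hc b
    linarith
  have hα' : α ≠ 0 := by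
    rintro rfl
    have : β = 1 := by linarith
    subst this
    simp at heq
    exact n2 heq.symm
  have hβ' : β ≠ 0 := by
    rintro rfl
    have : α = 1 := by linarith
    subst this
    simp at heq
    exact n1 heq
  have pα : 0 < α.toNNReal := Real.toNNReal_pos.2 (lt_of_le_of_ne hα hα'.symm)
  have pβ : 0 < β.toNNReal := Real.toNNReal_pos.2 (lt_of_le_of_ne hβ hβ'.symm)
  refine ⟨α.toNNReal⁻¹ * β.toNNReal, by positivity, ?_⟩
  rw [mul_smul, ← heq, smul_smul, inv_mul_cancel₀ pα.ne', one_smul]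

end IDU

namespace IDU

def Pop {ι : Type*} [Fintype ι] (e : ι → ℝ → ℝ) (w : ι → ℝ) : (ℝ → ℝ) →ₗ[ℝ] (ℝ → ℝ) where
  toFun f s := ∑ i, w i * f (e i s)
  map_add' f g := by
    funext s
    simp only [Pi.add_apply, mul_add, Finset.sum_add_distrib]
  map_smul' c f := by
    funext s
    simp only [Pi.smul_apply, smul_eq_mul, RingHom.id_apply, Finset.mul_sum]
    exact Finset.sum_congr rfl fun i _ => by ring

theorem Pop_apply {ι : Type*} [Fintype ι] (e : ι → ℝ → ℝ) (w : ι → ℝ) (f : ℝ → ℝ) (s : ℝ) :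
    Pop e w f s = ∑ i, w i * f (e i s) := rfl

def Lam {ι : Type*} [Fintype ι] (e : ι → ℝ → ℝ) (w : ι → ℝ) (n : ℕ) : (ℝ → ℝ) →ₗ[ℝ] ℝ :=
  (LinearMap.proj 0).comp ((Pop e w) ^ n)

def Sm {ι : Type*} [Fintype ι] (e : ι → ℝ → ℝ) (w : ι → ℝ) (N : ℕ) : (ℝ → ℝ) →ₗ[ℝ] ℝ :=
  ∑ n ∈ Finset.range N, Lam e w n

theorem Sm_apply {ι : Type*} [Fintype ι] (e : ι → ℝ → ℝ) (w : ι → ℝ) (N : ℕ) (f : ℝ → ℝ) :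
    Sm e w N f = ∑ n ∈ Finset.range N, Lam e w n f := by
  simp [Sm, LinearMap.sum_apply]

theorem Lam_zero {ι : Type*} [Fintype ι] (e : ι → ℝ → ℝ) (w : ι → ℝ) (f : ℝ → ℝ) :
    Lam e w 0 f = f 0 := by simp [Lam]

theorem Lam_P {ι : Type*} [Fintype ι] (e : ι → ℝ → ℝ) (w : ι → ℝ) (n : ℕ) (f : ℝ → ℝ) :
    Lam e w n (Pop e w f) = Lam e w (n+1) f := by
  simp [Lam, pow_succ]

theorem Lam_Pl {ι : Type*} [Fintype ι] (e : ι → ℝ → ℝ) (w : ι → ℝ) (n l : ℕ) (f : ℝ → ℝ) :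
    Lam e w n (((Pop e w)^l) f) = Lam e w (n+l) f := by
  simp [Lam, pow_add]

theorem Pop_mono {ι : Type*} [Fintype ι] {e : ι → ℝ → ℝ} {w : ι → ℝ} (hw : ∀ i, 0 < w i)
    {f g : ℝ → ℝ} (h : ∀ s, f s ≤ g s) (n : ℕ) : ∀ s, ((Pop e w)^n) f s ≤ ((Pop e w)^n) g s := by
  induction n with
  | zero => simpa using h
  | succ n ih =>
    intro s
    rw [pow_succ']
    exact Finset.sum_le_sum fun i _ => mul_le_mul_of_nonneg_left (ih _) (hw i).le

theorem Lam_mono {ι : Type*} [Fintype ι] {e : ι → ℝ → ℝ} {w : ι → ℝ} (hw : ∀ i, 0 < w i)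
    {f g : ℝ → ℝ} (h : ∀ s, f s ≤ g s) (n : ℕ) : Lam e w n f ≤ Lam e w n g :=
  Pop_mono hw h n 0

theorem Sm_mono {ι : Type*} [Fintype ι] {e : ι → ℝ → ℝ} {w : ι → ℝ} (hw : ∀ i, 0 < w i)
    {f g : ℝ → ℝ} (h : ∀ s, f s ≤ g s) (n : ℕ) : Sm e w n f ≤ Sm e w n g := by
  rw [Sm_apply, Sm_apply]
  exact Finset.sum_le_sum fun i _ => Lam_mono hw h i

theorem Lam_const {ι : Type*} [Fintype ι] (e : ι → ℝ → ℝ) {w : ι → ℝ} (hw1 : ∑ i, w i = 1)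
    (c : ℝ) (n : ℕ) : Lam e w n (fun _ => c) = c := by
  induction n with
  | zero => simp [Lam_zero]
  | succ n ih =>
    rw [← Lam_P]
    have : Pop e w (fun _ => c) = fun _ => c := by
      funext s; rw [Pop_apply, ← Finset.sum_mul, hw1, one_mul]
    rw [this, ih]

def bump (r s : ℝ) : ℝ := max 0 (min 1 (r + 1 - |s|))

theorem bump_nonneg (r s : ℝ) : 0 ≤ bump r s := le_max_left _ _
theorem bump_le (r s : ℝ) : bump r s ≤ 1 := max_le zero_le_one (min_le_left _ _)
theorem bump_one {r s : ℝ} (h : |s| ≤ r) : bump r s = 1 := by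
  rw [bump, min_eq_left (by linarith), max_eq_right zero_le_one]
theorem bump_zero {r s : ℝ} (h : r + 1 ≤ |s|) : bump r s = 0 := by
  rw [bump, max_eq_left]
  exact (min_le_right _ _).trans (by linarith)
theorem bump_cont (r : ℝ) : Continuous (bump r) := by
  unfold bump; fun_prop
theorem bump_cpt (r : ℝ) : HasCompactSupport (bump r) := by
  refine HasCompactSupport.intro (isCompact_closedBall (0:ℝ) (r+1)) fun s hs => bump_zero ?_
  simp only [Metric.mem_closedBall, dist_zero_right, Real.norm_eq_abs, not_le] at hs
  exact hs.le

theorem cpt_bump (f : ℝ → ℝ) (hf : Continuous f) (hs : HasCompactSupport f) :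
    ∃ M r, 0 ≤ M ∧ 0 ≤ r ∧ ∀ s, |f s| ≤ M * bump r s := by
  obtain ⟨M, hM⟩ := hs.exists_bound_of_continuous hf
  obtain ⟨r, hr⟩ := hs.isCompact.isBounded.subset_closedBall (0:ℝ)
  have hM0 : 0 ≤ M := (norm_nonneg _).trans (hM 0)
  refine ⟨M, max r 0, hM0, le_max_right _ _, fun s => ?_⟩
  by_cases h : s ∈ tsupport f
  · have := hr h
    simp only [Metric.mem_closedBall, dist_zero_right, Real.norm_eq_abs] at this
    rw [bump_one (this.trans (le_max_left _ _)), mul_one]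
    exact hM s
  · rw [image_eq_zero_of_notMem_tsupport h, abs_zero]
    exact mul_nonneg hM0 (bump_nonneg _ _)

/-- domination -/
theorem dom0 {ι : Type*} [Fintype ι] {e : ι → ℝ → ℝ} {w : ι → ℝ} (hw : ∀ i, 0 < w i)
    (i0 : ι) (R κ : ℝ) (hmv : ∀ s, R < |s| → |e i0 s| ≤ |s| - κ) (j : ℕ) :
    ∃ c > 0, ∀ s, |s| ≤ R + j * κ → c ≤ ∑ l ∈ Finset.range (j+1), ((Pop e w)^l) (bump R) s := by
  have hpos : ∀ l s, 0 ≤ ((Pop e w)^l) (bump R) s := by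
    intro l s
    have := Pop_mono (e := e) hw (fun s => bump_nonneg R s) l s
    have h0 : ((Pop e w)^l) (fun _ => (0:ℝ)) = 0 := map_zero ((Pop e w)^l)
    rw [h0] at this
    exact this
  induction j with
  | zero =>
    refine ⟨1, one_pos, fun s hs => ?_⟩
    simp only [Nat.cast_zero, zero_mul, add_zero] at hs
    simp [bump_one hs]
  | succ j ih =>
    obtain ⟨c, hc, h⟩ := ih
    refine ⟨min 1 (w i0 * c), lt_min one_pos (mul_pos (hw i0) hc), fun s hs => ?_⟩
    rw [Finset.sum_range_succ']
    rcases le_or_gt |s| R with hR | hR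
    · refine (min_le_left _ _).trans ?_
      simp only [pow_zero, Module.End.one_apply, bump_one hR]
      exact le_add_of_nonneg_left (Finset.sum_nonneg fun l _ => hpos _ _)
    · refine (min_le_right _ _).trans ?_
      refine le_trans ?_ (le_add_of_nonneg_right (hpos _ _))
      have h1 := h (e i0 s) (by
        have := hmv s hR
        push_cast at hs
        linarith)
      calc w i0 * c ≤ w i0 * ∑ l ∈ Finset.range (j+1), ((Pop e w)^l) (bump R) (e i0 s) :=
            mul_le_mul_of_nonneg_left h1 (hw i0).le
        _ ≤ ∑ i, w i * ∑ l ∈ Finset.range (j+1), ((Pop e w)^l) (bump R) (e i s) :=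
            Finset.single_le_sum (f := fun i => w i * ∑ l ∈ Finset.range (j+1), ((Pop e w)^l) (bump R) (e i s))
              (fun i _ => mul_nonneg (hw i).le (Finset.sum_nonneg fun l _ => hpos _ _)) (Finset.mem_univ i0)
        _ = _ := by
            simp_rw [Finset.mul_sum]
            rw [Finset.sum_comm]
            refine Finset.sum_congr rfl fun l _ => ?_
            rw [pow_succ']
            rfl

theorem Lam_nonneg {ι : Type*} [Fintype ι] {e : ι → ℝ → ℝ} {w : ι → ℝ} (hw : ∀ i, 0 < w i)
    {f : ℝ → ℝ} (h : ∀ s, 0 ≤ f s) (n : ℕ) : 0 ≤ Lam e w n f := by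
  have := Lam_mono (e := e) hw h n
  have h0 : Lam e w n (fun _ => (0:ℝ)) = 0 := map_zero (Lam e w n)
  linarith

theorem dom {ι : Type*} [Fintype ι] {e : ι → ℝ → ℝ} {w : ι → ℝ} (hw : ∀ i, 0 < w i)
    (hw1 : ∑ i, w i = 1)
    (i0 : ι) (R κ : ℝ) (hκ : 0 < κ) (hmv : ∀ s, R < |s| → |e i0 s| ≤ |s| - κ) (r : ℝ) :
    ∃ C, 0 ≤ C ∧ ∀ N, Sm e w N (bump r) ≤ C * (Sm e w N (bump R) + 1) := by
  obtain ⟨j, hj⟩ := exists_nat_ge ((r + 1 - R) / κ)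
  rw [div_le_iff₀ hκ] at hj
  obtain ⟨c, hc, h⟩ := dom0 (e := e) hw i0 R κ hmv j
  have hpos : ∀ n, 0 ≤ Lam e w n (bump R) := Lam_nonneg hw (bump_nonneg R)
  have hle1 : ∀ n, Lam e w n (bump R) ≤ 1 := fun n =>
    (Lam_mono hw (g := fun _ => 1) (bump_le R) n).trans (Lam_const e hw1 1 n).le
  have hSpos : ∀ N, 0 ≤ Sm e w N (bump R) := fun N => by
    rw [Sm_apply]; exact Finset.sum_nonneg fun n _ => hpos n
  have hP0 : ∀ l s, 0 ≤ ((Pop e w)^l) (bump R) s := by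
    intro l s
    have := Pop_mono (e := e) hw (fun s => bump_nonneg R s) l s
    have h0 : ((Pop e w)^l) (fun _ => (0:ℝ)) = 0 := map_zero ((Pop e w)^l)
    rw [h0] at this
    exact this
  have hb : ∀ s, bump r s ≤ (c⁻¹ • ∑ l ∈ Finset.range (j+1), ((Pop e w)^l) (bump R)) s := by
    intro s
    simp only [Pi.smul_apply, Finset.sum_apply, smul_eq_mul]
    rcases le_or_gt (r+1) |s| with hs | hs
    · rw [bump_zero hs]
      exact mul_nonneg (inv_pos.2 hc).le (Finset.sum_nonneg fun l _ => hP0 l s)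
    · have := h s (by linarith)
      calc bump r s ≤ 1 := bump_le _ _
        _ = c⁻¹ * c := (inv_mul_cancel₀ hc.ne').symm
        _ ≤ _ := mul_le_mul_of_nonneg_left this (inv_pos.2 hc).le
  have hshift : ∀ l N, ∑ n ∈ Finset.range N, Lam e w (n + l) (bump R) ≤ Sm e w N (bump R) + l := by
    intro l
    induction l with
    | zero => intro N; simp [Sm_apply]
    | succ l ih =>
      intro N
      have h1 : ∑ n ∈ Finset.range N, Lam e w (n + (l+1)) (bump R) + Lam e w (0+l) (bump R)
          = ∑ n ∈ Finset.range N, Lam e w (n + l) (bump R) + Lam e w (N+l) (bump R) := by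
        rw [← Finset.sum_range_succ (fun n => Lam e w (n + l) (bump R)),
          Finset.sum_range_succ' (fun n => Lam e w (n + l) (bump R))]
        congr 1
        exact Finset.sum_congr rfl fun n _ => by rw [add_assoc, add_comm 1 l]
      have := ih N
      have := hpos (0+l)
      have := hle1 (N+l)
      push_cast
      linarith
  refine ⟨c⁻¹ * ((j+1) * (j+1)), by positivity, fun N => (Sm_mono hw hb N).trans ?_⟩
  rw [map_smul, map_sum, smul_eq_mul, mul_assoc]
  refine mul_le_mul_of_nonneg_left ?_ (inv_pos.2 hc).le
  have : ∀ l ∈ Finset.range (j+1), Sm e w N (((Pop e w)^l) (bump R)) ≤ (j+1) * (Sm e w N (bump R) + 1) := by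
    intro l hl
    rw [Sm_apply]
    simp_rw [Lam_Pl]
    refine (hshift l N).trans ?_
    have : (l:ℝ) ≤ j := by
      have := Finset.mem_range.1 hl
      exact_mod_cast Nat.lt_succ_iff.1 this
    have := hSpos N
    nlinarith [Nat.cast_nonneg (α := ℝ) j]
  refine (Finset.sum_le_sum this).trans ?_
  simp [mul_assoc]

theorem Sm_top {ι : Type*} [Fintype ι] {e : ι → ℝ → ℝ} {w : ι → ℝ} (hw : ∀ i, 0 < w i)
    (hw1 : ∑ i, w i = 1)
    (i0 : ι) (R κ : ℝ) (hκ : 0 < κ) (hmv : ∀ s, R < |s| → |e i0 s| ≤ |s| - κ)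
    (V : ℝ → ℝ) (hV : ∀ s, |s| ≤ V s) (B : ℝ) (hB : 0 ≤ B)
    (hPV : ∀ s, Pop e w V s ≤ V s + B * bump R s) :
    Tendsto (fun N => Sm e w N (bump R)) atTop atTop := by
  have hpos : ∀ n, 0 ≤ Lam e w n (bump R) := Lam_nonneg hw (bump_nonneg R)
  have hmono : Monotone (fun N => Sm e w N (bump R)) := by
    refine monotone_nat_of_le_succ fun N => ?_
    rw [Sm_apply, Sm_apply, Finset.sum_range_succ]
    linarith [hpos N]
  rcases tendsto_atTop_of_monotone hmono with h | ⟨l, hl⟩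
  · exact h
  exfalso
  have hbd : ∀ N, Sm e w N (bump R) ≤ l := fun N => hmono.ge_of_tendsto hl N
  have hLV : ∀ N, Lam e w N V ≤ V 0 + B * Sm e w N (bump R) := by
    intro N
    induction N with
    | zero => simp [Lam_zero, Sm_apply]
    | succ N ih =>
      rw [← Lam_P, Sm_apply, Finset.sum_range_succ, ← Sm_apply]
      have h1 : Lam e w N (Pop e w V) ≤ Lam e w N (V + B • bump R) := Lam_mono hw hPV N
      rw [map_add, map_smul, smul_eq_mul] at h1
      linarith
  set C' := |V 0 + B * l| with hC'
  have hLV' : ∀ N, Lam e w N V ≤ C' := fun N => by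
    refine (hLV N).trans (le_trans ?_ (le_abs_self _))
    have := mul_le_mul_of_nonneg_left (hbd N) hB
    linarith
  set r := 2 * C' + 1 with hr
  have hr0 : 0 < r := by positivity
  have hb : ∀ s, (fun _ => (1:ℝ)) s ≤ (bump r + r⁻¹ • V) s := by
    intro s
    simp only [Pi.add_apply, Pi.smul_apply, smul_eq_mul]
    rcases le_or_gt |s| r with hs | hs
    · rw [bump_one hs]
      have : 0 ≤ V s := (abs_nonneg s).trans (hV s)
      have := mul_nonneg (inv_pos.2 hr0).le this
      linarith
    · have : r⁻¹ * r ≤ r⁻¹ * V s := mul_le_mul_of_nonneg_left (hs.le.trans (hV s)) (inv_pos.2 hr0).le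
      rw [inv_mul_cancel₀ hr0.ne'] at this
      linarith [bump_nonneg r s]
  have hhalf : ∀ N, 1/2 ≤ Lam e w N (bump r) := by
    intro N
    have h1 := Lam_mono (e := e) hw hb N
    rw [Lam_const e hw1, map_add, map_smul, smul_eq_mul] at h1
    have h2 : r⁻¹ * Lam e w N V ≤ r⁻¹ * (r/2) :=
      mul_le_mul_of_nonneg_left ((hLV' N).trans (by linarith)) (inv_pos.2 hr0).le
    have h3 : r⁻¹ * (r/2) = 1/2 := by field_simp
    linarith
  obtain ⟨C, hC, hdom⟩ := dom (e := e) hw hw1 i0 R κ hκ hmv r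
  have hN : ∀ N : ℕ, (N:ℝ) * (1/2) ≤ C * (l + 1) := by
    intro N
    refine le_trans ?_ ((hdom N).trans (mul_le_mul_of_nonneg_left (by linarith [hbd N]) hC))
    rw [Sm_apply]
    calc (N:ℝ) * (1/2) = ∑ n ∈ Finset.range N, (1/2:ℝ) := by simp
      _ ≤ _ := Finset.sum_le_sum fun n _ => hhalf n
  obtain ⟨N, hN'⟩ := exists_nat_gt (2 * (C * (l+1)))
  linarith [hN N]

end IDU

namespace IDU

open CompactlySupported in
theorem existsR0 {ι : Type*} [Fintype ι] (e : ι → ℝ ≃o ℝ) {w : ι → ℝ} (hw : ∀ i, 0 < w i)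
    (hw1 : ∑ i, w i = 1)
    (i0 : ι) (R κ : ℝ) (hR : 0 ≤ R) (hκ : 0 < κ) (hmv : ∀ s, R < |s| → |e i0 s| ≤ |s| - κ)
    (V : ℝ → ℝ) (hV : ∀ s, |s| ≤ V s) (B : ℝ) (hB : 0 ≤ B)
    (hPV : ∀ s, Pop (fun i => e i) w V s ≤ V s + B * bump R s) :
    ∃ ν : Measure ℝ, IsLocallyFiniteMeasure ν ∧ ν ≠ 0 ∧ InvR e w ν := by
  set E : ι → ℝ → ℝ := fun i => e i with hEdef
  set Z : ℕ → ℝ := fun N => Sm E w N (bump R) with hZ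
  have htop : Tendsto Z atTop atTop := Sm_top (e := E) hw hw1 i0 R κ hκ hmv V hV B hB hPV
  have hpos : ∀ n, 0 ≤ Lam E w n (bump R) := Lam_nonneg hw (bump_nonneg R)
  have hZpos : ∀ N, 0 ≤ Z N := fun N => by
    simp only [hZ]; rw [Sm_apply]; exact Finset.sum_nonneg fun n _ => hpos n
  have hfil : (hyperfilter ℕ : Filter ℕ) ≤ atTop := by
    rw [← Nat.cofinite_eq_atTop]; exact hyperfilter_le_cofinite
  have hbd : ∀ f : ℝ → ℝ, Continuous f → HasCompactSupport f →
      ∃ D, ∀ᶠ N in atTop, Sm E w N f / Z N ∈ Icc (-D) D := by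
    intro f hf hs
    obtain ⟨M, r, hM, hr, hfM⟩ := cpt_bump f hf hs
    obtain ⟨C, hC, hdom⟩ := dom (e := E) hw hw1 i0 R κ hκ hmv r
    refine ⟨M * (C * 2), ?_⟩
    filter_upwards [htop.eventually_ge_atTop 1] with N hN
    have hZ0 : 0 < Z N := by linarith
    have h1 : Sm E w N f ≤ M * Sm E w N (bump r) := by
      have := Sm_mono (e := E) (g := M • bump r) hw (fun s => (le_abs_self _).trans (hfM s)) N
      rwa [map_smul, smul_eq_mul] at this
    have h2 : -(M * Sm E w N (bump r)) ≤ Sm E w N f := by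
      have := Sm_mono (e := E) (f := -(M • bump r)) hw (fun s => (abs_le.1 (hfM s)).1) N
      rwa [map_neg, map_smul, smul_eq_mul] at this
    have h3 : M * Sm E w N (bump r) ≤ M * (C * 2) * Z N := by
      rw [mul_assoc]
      refine mul_le_mul_of_nonneg_left ((hdom N).trans ?_) hM
      rw [mul_assoc]
      exact mul_le_mul_of_nonneg_left (by linarith) hC
    constructor
    · rw [le_div_iff₀ hZ0]; linarith
    · rw [div_le_iff₀ hZ0]; linarith
  have hlim : ∀ f : C_c(ℝ, ℝ), ∃ l, Tendsto (fun N => Sm E w N f / Z N) (hyperfilter ℕ) (𝓝 l) := by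
    intro f
    obtain ⟨D, hD⟩ := hbd f f.continuous_toFun f.hasCompactSupport
    obtain ⟨l, -, hl⟩ := isCompact_Icc.ultrafilter_le_nhds'
      ((hyperfilter ℕ).map (fun N => Sm E w N f / Z N)) (hfil hD)
    exact ⟨l, hl⟩
  choose Λ hΛ using hlim
  have hlin : ∃ L : C_c(ℝ, ℝ) →ₗ[ℝ] ℝ, ∀ f, L f = Λ f := by
    refine ⟨⟨⟨Λ, fun f g => ?_⟩, fun c f => ?_⟩, fun f => rfl⟩
    · refine tendsto_nhds_unique (hΛ (f+g)) (((hΛ f).add (hΛ g)).congr fun N => ?_)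
      rw [← add_div, ← map_add]; rfl
    · refine tendsto_nhds_unique (hΛ (c • f)) (((hΛ f).const_mul c).congr fun N => ?_)
      rw [← mul_div_assoc, ← smul_eq_mul, ← map_smul]; rfl
  obtain ⟨L, hL⟩ := hlin
  have hLpos : ∀ f, 0 ≤ f → 0 ≤ L f := by
    intro f hf
    rw [hL]
    refine ge_of_tendsto' (hΛ f) fun N => div_nonneg ?_ (hZpos N)
    rw [Sm_apply]
    exact Finset.sum_nonneg fun n _ => Lam_nonneg hw hf n
  let L' : C_c(ℝ, ℝ) →ₚ[ℝ] ℝ := PositiveLinearMap.mk₀ L hLpos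
  have hL' : ∀ f : C_c(ℝ, ℝ), ∫ x, f x ∂(RealRMK.rieszMeasure L') = Λ f := by
    intro f
    rw [RealRMK.integral_rieszMeasure, ← hL]
    rfl
  refine ⟨RealRMK.rieszMeasure L', inferInstance, ?_, ?_⟩
  · intro h0
    let χ : C_c(ℝ, ℝ) := ⟨⟨bump R, bump_cont R⟩, bump_cpt R⟩
    have h1 := hL' χ
    rw [h0, integral_zero_measure] at h1
    have h2 : Tendsto (fun N => Sm E w N χ / Z N) (hyperfilter ℕ) (𝓝 1) := by
      refine Tendsto.mono_left ?_ hfil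
      refine tendsto_const_nhds.congr' ?_
      filter_upwards [htop.eventually_ge_atTop 1] with N hN
      exact (div_self (by linarith : Z N ≠ 0)).symm
    have := tendsto_nhds_unique h2 (hΛ χ)
    rw [← h1] at this
    exact one_ne_zero this
  · intro f hf hs
    let fc : C_c(ℝ, ℝ) := ⟨⟨f, hf⟩, hs⟩
    let fi : ι → C_c(ℝ, ℝ) := fun i => ⟨⟨fun x => f (e i x), hf.comp (e i).continuous⟩,
      hs.comp_homeomorph (e i).toHomeomorph⟩
    have h1 : ∫ x, f x ∂(RealRMK.rieszMeasure L') = Λ fc := hL' fc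
    have h2 : ∀ i, ∫ x, f (e i x) ∂(RealRMK.rieszMeasure L') = Λ (fi i) := fun i => hL' (fi i)
    rw [h1]
    simp_rw [h2]
    have t1 : Tendsto (fun N => ∑ i, w i * (Sm E w N (fi i) / Z N)) (hyperfilter ℕ)
        (𝓝 (∑ i, w i * Λ (fi i))) :=
      tendsto_finsetSum _ fun i _ => (hΛ (fi i)).const_mul (w i)
    have hPf : Pop E w f = ∑ i, w i • (fi i : ℝ → ℝ) := by
      funext s
      simp only [Pop_apply, Finset.sum_apply, Pi.smul_apply, smul_eq_mul]
      rfl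
    have hsum : ∀ N, ∑ i, w i * (Sm E w N (fi i) / Z N) = Sm E w N f / Z N +
        (Lam E w N f - f 0) / Z N := by
      intro N
      have a1 : Sm E w N (Pop E w f) = Sm E w N f + (Lam E w N f - f 0) := by
        rw [Sm_apply, Sm_apply]
        simp_rw [Lam_P]
        have b := Finset.sum_range_succ' (fun n => Lam E w n f) N
        rw [Finset.sum_range_succ, Lam_zero] at b
        linarith
      rw [← add_div, ← a1, hPf, map_sum, Finset.sum_div]
      refine Finset.sum_congr rfl fun i _ => ?_
      rw [map_smul, smul_eq_mul, mul_div_assoc]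
    obtain ⟨M, hM⟩ := hs.exists_bound_of_continuous hf
    have t2 : Tendsto (fun N => (Lam E w N f - f 0) / Z N) atTop (𝓝 0) := by
      refine squeeze_zero_norm' (a := fun N => 2 * M / Z N) ?_ (tendsto_const_nhds.div_atTop htop)
      filter_upwards [htop.eventually_ge_atTop 1] with N hN
      have hZ0 : 0 < Z N := by linarith
      rw [norm_div, Real.norm_of_nonneg hZ0.le]
      refine div_le_div_of_nonneg_right ?_ hZ0.le
      have u1 : Lam E w N f ≤ M := (Lam_mono hw (g := fun _ => M)
        (fun s => (le_abs_self _).trans (hM s)) N).trans (Lam_const E hw1 M N).le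
      have u2 : -M ≤ Lam E w N f := (Lam_const E hw1 (-M) N).ge.trans
        (Lam_mono hw (f := fun _ => -M) (fun s => (abs_le.1 (hM s)).1) N)
      have u3 := abs_le.1 (hM 0)
      rw [Real.norm_eq_abs, abs_le]
      constructor <;> linarith [u3.1, u3.2]
    have t3 : Tendsto (fun N => ∑ i, w i * (Sm E w N (fi i) / Z N)) (hyperfilter ℕ)
        (𝓝 (Λ fc + 0)) := by
      simp_rw [hsum]
      exact (hΛ fc).add (t2.mono_left hfil)
    rw [add_zero] at t3
    exact tendsto_nhds_unique t3 t1

theorem existsR {ι : Type*} [Fintype ι] (e : ι → ℝ ≃o ℝ) {w mp mm : ι → ℝ} {B K : ℝ}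
    (hw : ∀ i, 0 < w i) (hw1 : ∑ i, w i = 1) (hB : 0 ≤ B) (hK : 0 ≤ K)
    (hp : 0 ≤ ∑ i, w i * mp i) (hm : 0 ≤ ∑ i, w i * mm i)
    (i0 : ι) (i0p : 0 < mp i0) (i0m : 0 < mm i0)
    (hEp : ∀ i s, |e i s - s + mp i| ≤ B * Real.exp (-s))
    (hEm : ∀ i s, |e i s - s - mm i| ≤ B * Real.exp s)
    (hd : ∀ i s, |e i s - s| ≤ K) :
    ∃ ν : Measure ℝ, IsLocallyFiniteMeasure ν ∧ ν ≠ 0 ∧ InvR e w ν := by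
  obtain ⟨A1, hA1, R1, hV1⟩ := superV w (fun i => -mp i) (fun i => e i) B hw hw1
    (by simp only [mul_neg, Finset.sum_neg_distrib]; linarith) ⟨i0, by simpa using i0p.ne'⟩ hB
    (fun i s => by simpa [sub_neg_eq_add] using hEp i s)
  obtain ⟨A2, hA2, R2, hV2⟩ := superV w (fun i => -mm i) (fun i s => -(e i (-s))) B hw hw1
    (by simp only [mul_neg, Finset.sum_neg_distrib]; linarith) ⟨i0, by simpa using i0m.ne'⟩ hB
    (fun i s => by
      have := hEm i (-s)
      rw [← abs_neg] at this
      convert this using 2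
      ring)
  have ev : ∀ c : ℝ, 0 < c → ∃ T, ∀ s ≥ T, B * Real.exp (-s) ≤ c := fun c hc =>
    eventually_atTop.1 ((tendsto_exp_neg_zero B).eventually (eventually_le_nhds hc))
  set κ := min (mp i0) (mm i0) / 2 with hκ
  have hκ0 : 0 < κ := half_pos (lt_min i0p i0m)
  have hκ1 : 2 * κ ≤ mp i0 := by rw [hκ]; linarith [min_le_left (mp i0) (mm i0)]
  have hκ2 : 2 * κ ≤ mm i0 := by rw [hκ]; linarith [min_le_right (mp i0) (mm i0)]
  obtain ⟨T, hT⟩ := ev κ hκ0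
  set R := max (max R1 R2) (max T K) with hR
  have r1 : R1 ≤ R := (le_max_left _ _).trans (le_max_left _ _)
  have r2 : R2 ≤ R := (le_max_right _ _).trans (le_max_left _ _)
  have r3 : T ≤ R := (le_max_left _ _).trans (le_max_right _ _)
  have r4 : K ≤ R := (le_max_right _ _).trans (le_max_right _ _)
  let V : ℝ → ℝ := fun s => if 0 ≤ s then s + A1 * (1 - Real.exp (-s)) else -s + A2 * (1 - Real.exp s)
  have Vp : ∀ s, 0 ≤ s → V s = s + A1 * (1 - Real.exp (-s)) := fun s hs => if_pos hs
  have Vm : ∀ s, s ≤ 0 → V s = -s + A2 * (1 - Real.exp s) := by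
    intro s hs
    rcases hs.eq_or_lt with rfl | h
    · rw [Vp 0 le_rfl]; simp
    · exact if_neg (not_le.2 h)
  have Vge : ∀ s, |s| ≤ V s := by
    intro s
    rcases le_total 0 s with h | h
    · rw [Vp s h, abs_of_nonneg h]
      have : Real.exp (-s) ≤ 1 := Real.exp_le_one_iff.2 (by linarith)
      nlinarith
    · rw [Vm s h, abs_of_nonpos h]
      have : Real.exp s ≤ 1 := Real.exp_le_one_iff.2 (by linarith)
      nlinarith
  have Vle : ∀ s, V s ≤ |s| + A1 + A2 := by
    intro s
    rcases le_total 0 s with h | h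
    · rw [Vp s h, abs_of_nonneg h]
      nlinarith [Real.exp_pos (-s)]
    · rw [Vm s h, abs_of_nonpos h]
      nlinarith [Real.exp_pos s]
  refine existsR0 e hw hw1 i0 R κ (hK.trans r4) hκ0 ?_ V Vge (R + K + A1 + A2)
    (by linarith) ?_
  · intro s hs
    have d := abs_le.1 (hd i0 s)
    rcases le_total 0 s with h | h
    · rw [abs_of_nonneg h] at hs ⊢
      have a := (abs_le.1 (hEp i0 s)).2
      have b := hT s (by linarith)
      rw [abs_of_nonneg (by linarith)]
      linarith
    · rw [abs_of_nonpos h] at hs ⊢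
      have a := (abs_le.1 (hEm i0 s)).1
      have b := hT (-s) (by linarith)
      rw [neg_neg] at b
      rw [abs_of_nonpos (by linarith)]
      linarith
  · intro s
    rw [Pop_apply]
    rcases le_or_gt |s| R with hs | hs
    · rw [bump_one hs]
      have : ∑ i, w i * V (e i s) ≤ R + K + A1 + A2 := by
        refine wavg_le hw hw1 (fun i => V (e i s)) _ fun i => (Vle _).trans ?_
        have := abs_sub_abs_le_abs_sub (e i s) s
        linarith [hd i s]
      linarith [(abs_nonneg s).trans (Vge s)]
    · have hb := mul_nonneg (by linarith : 0 ≤ R + K + A1 + A2) (bump_nonneg R s)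
      refine le_trans ?_ (le_add_of_nonneg_right hb)
      rcases le_total 0 s with h | h
      · rw [abs_of_nonneg h] at hs
        have a := hV1 s (by linarith)
        rw [Vp s h]
        calc ∑ i, w i * V (e i s) = ∑ i, (w i * (e i s - A1 * Real.exp (-(e i s))) + w i * A1) := by
              refine Finset.sum_congr rfl fun i _ => ?_
              rw [Vp _ (by linarith [(abs_le.1 (hd i s)).1])]; ring
          _ ≤ _ := by
              rw [Finset.sum_add_distrib, ← Finset.sum_mul, hw1]
              linarith
      · rw [abs_of_nonpos h] at hs
        have a := hV2 (-s) (by linarith)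
        simp only [neg_neg] at a
        rw [Vm s h]
        calc ∑ i, w i * V (e i s) = ∑ i, (w i * (-(e i s) - A2 * Real.exp (e i s)) + w i * A2) := by
              refine Finset.sum_congr rfl fun i _ => ?_
              rw [Vm _ (by linarith [(abs_le.1 (hd i s)).2])]; ring
          _ ≤ _ := by
              rw [Finset.sum_add_distrib, ← Finset.sum_mul, hw1]
              linarith
end IDU

namespace IDU

theorem log_lip1 {a b c : ℝ} (hc : 0 < c) (ha : c ≤ a) (hb : c ≤ b) :
    Real.log a - Real.log b ≤ |a - b| / c := by
  have ha0 : 0 < a := hc.trans_le ha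
  have hb0 : 0 < b := hc.trans_le hb
  rw [← Real.log_div ha0.ne' hb0.ne']
  calc Real.log (a/b) ≤ a / b - 1 := Real.log_le_sub_one_of_pos (div_pos ha0 hb0)
    _ = (a - b) / b := by field_simp
    _ ≤ |a - b| / b := div_le_div_of_nonneg_right (le_abs_self _) hb0.le
    _ ≤ |a - b| / c := div_le_div_of_nonneg_left (abs_nonneg _) hc hb

theorem log_lip {a b c : ℝ} (hc : 0 < c) (ha : c ≤ a) (hb : c ≤ b) :
    |Real.log a - Real.log b| ≤ |a - b| / c := by
  rw [abs_le]
  have h1 := log_lip1 hc ha hb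
  have h2 := log_lip1 hc hb ha
  rw [abs_sub_comm] at h2
  constructor <;> linarith

structure Diff01 (φ : ℝ → ℝ) : Prop where
  C2 : ContDiffOn ℝ 2 φ (Icc 0 1)
  z : φ 0 = 0
  o : φ 1 = 1
  mono : StrictMonoOn φ (Icc 0 1)
  surj : SurjOn φ (Icc 0 1) (Icc 0 1)
  dpos : ∀ u ∈ Icc (0:ℝ) 1, 0 < derivWithin φ (Icc 0 1) u

theorem mem01 {x : ℝ} (hx : x ∈ Ioo (0:ℝ) 1) : x ∈ Icc (0:ℝ) 1 := Ioo_subset_Icc_self hx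

theorem Diff01.maps {φ : ℝ → ℝ} (h : Diff01 φ) {x : ℝ} (hx : x ∈ Ioo (0:ℝ) 1) :
    φ x ∈ Ioo (0:ℝ) 1 := by
  have h1 := h.mono (left_mem_Icc.2 zero_le_one) (mem01 hx) hx.1
  have h2 := h.mono (mem01 hx) (right_mem_Icc.2 zero_le_one) hx.2
  rw [h.z] at h1
  rw [h.o] at h2
  exact ⟨h1, h2⟩

theorem refl_mem {x : ℝ} (hx : x ∈ Icc (0:ℝ) 1) : 1 - x ∈ Icc (0:ℝ) 1 :=
  ⟨by linarith [hx.2], by linarith [hx.1]⟩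

theorem refl_deriv {φ : ℝ → ℝ} (h : ContDiffOn ℝ 2 φ (Icc 0 1)) {u : ℝ} (hu : u ∈ Icc (0:ℝ) 1) :
    derivWithin (fun x => 1 - φ (1 - x)) (Icc 0 1) u = derivWithin φ (Icc 0 1) (1 - u) := by
  have hd : HasDerivWithinAt φ (derivWithin φ (Icc 0 1) (1 - u)) (Icc 0 1) (1 - u) :=
    ((h.differentiableOn (by norm_num)) _ (refl_mem hu)).hasDerivWithinAt
  have hr : HasDerivWithinAt (fun x : ℝ => 1 - x) (-1) (Icc 0 1) u :=
    ((hasDerivAt_id u).const_sub 1).hasDerivWithinAt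
  have hc := (hd.comp u hr (fun x hx => refl_mem hx)).const_sub 1
  have := hc.derivWithin (uniqueDiffOn_Icc zero_lt_one u hu)
  simpa [comp_def] using this

theorem Diff01.refl {φ : ℝ → ℝ} (h : Diff01 φ) : Diff01 (fun x => 1 - φ (1 - x)) where
  C2 := contDiffOn_const.sub (h.C2.comp (contDiffOn_const.sub contDiffOn_id) (fun x hx => refl_mem hx))
  z := by simp [h.o]
  o := by simp [h.z]
  mono := fun x hx y hy hxy => by
    have := h.mono (refl_mem hy) (refl_mem hx) (by linarith)
    linarith
  surj := fun y hy => by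
    obtain ⟨x, hx, hxy⟩ := h.surj (refl_mem hy)
    exact ⟨1 - x, refl_mem hx, by simp [hxy]⟩
  dpos := fun u hu => by
    rw [refl_deriv h.C2 hu]
    exact h.dpos _ (refl_mem hu)

theorem Diff01.q {φ : ℝ → ℝ} (h : Diff01 φ) :
    ∃ c > 0, ∃ C ≥ 0, ∀ x ∈ Ioo (0:ℝ) 1, c ≤ φ x / x ∧
      |φ x / x - derivWithin φ (Icc 0 1) 0| ≤ C * x := by
  obtain ⟨C0, hC0⟩ := exists_taylor_mean_remainder_bound (f := φ) (n := 1) (zero_le_one' ℝ)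
    (by simpa [one_add_one_eq_two] using h.C2)
  set a := derivWithin φ (Icc 0 1) 0 with ha
  have ha0 : 0 < a := h.dpos 0 (left_mem_Icc.2 zero_le_one)
  have hq : ∀ x ∈ Ioo (0:ℝ) 1, |φ x / x - a| ≤ |C0| * x := by
    intro x hx
    have h1 := hC0 x (mem01 hx)
    rw [taylorWithinEval_succ, taylor_within_zero_eval, iteratedDerivWithin_one, h.z] at h1
    simp only [Nat.factorial, Nat.cast_zero, zero_add, Nat.cast_one, one_mul, inv_one, sub_zero, pow_one, smul_eq_mul,
      Real.norm_eq_abs] at h1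
    rw [← ha] at h1
    have h2 : φ x / x - a = (φ x - x * a) / x := by field_simp [hx.1.ne']
    rw [h2, abs_div, abs_of_pos hx.1, div_le_iff₀ hx.1]
    have h3 : C0 * x ^ (1+1) ≤ |C0| * x * x := by
      have := mul_le_mul_of_nonneg_right (le_abs_self C0) (sq_nonneg x)
      calc C0 * x ^ (1+1) = C0 * x^2 := by norm_num
        _ ≤ |C0| * x^2 := this
        _ = _ := by ring
    linarith
  set δ := min (1/2) (a / (2 * (|C0| + 1))) with hδ
  have hδ0 : 0 < δ := lt_min (by norm_num) (by positivity)
  have hδ1 : δ ≤ 1/2 := min_le_left _ _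
  have hδ2 : δ ≤ a / (2 * (|C0| + 1)) := min_le_right _ _
  have hδm : δ ∈ Ioo (0:ℝ) 1 := ⟨hδ0, by linarith⟩
  refine ⟨min (a/2) (φ δ), lt_min (by linarith) (h.maps hδm).1, |C0|, abs_nonneg _, fun x hx => ⟨?_, hq x hx⟩⟩
  rcases le_total x δ with hxδ | hxδ
  · refine (min_le_left _ _).trans ?_
    have h1 := (abs_le.1 (hq x hx)).1
    have h2 : (|C0| + 1) * δ ≤ a / 2 := by
      calc (|C0| + 1) * δ ≤ (|C0| + 1) * (a / (2 * (|C0| + 1))) :=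
            mul_le_mul_of_nonneg_left hδ2 (by positivity)
        _ = a / 2 := by field_simp
    have h3 : |C0| * x ≤ (|C0| + 1) * δ :=
      mul_le_mul (by linarith) hxδ hx.1.le (by positivity)
    linarith
  · refine (min_le_right _ _).trans ?_
    rw [le_div_iff₀ hx.1]
    have h1 := h.mono.monotoneOn (mem01 hδm) (mem01 hx) hxδ
    have h2 := (h.maps hδm).1
    nlinarith [hx.2]

theorem Diff01.est {φ : ℝ → ℝ} (h : Diff01 φ) :
    ∃ B ≥ 0, ∀ x ∈ Ioo (0:ℝ) 1, |Real.log (φ x / x) - Real.log ((1 - φ x) / (1 - x))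
      - Real.log (derivWithin φ (Icc 0 1) 0)| ≤ B * (x / (1 - x)) := by
  obtain ⟨c, hc, C, hC, hq⟩ := h.q
  obtain ⟨c', hc', C', hC', hq'⟩ := h.refl.q
  set a := derivWithin φ (Icc 0 1) 0 with ha
  have ha0 : 0 < a := h.dpos 0 (left_mem_Icc.2 zero_le_one)
  refine ⟨C / min c a + (1 + a + C) / min c' 1, by positivity, fun x hx => ?_⟩
  obtain ⟨q1, q2⟩ := hq x hx
  obtain ⟨p1, -⟩ := hq' (1 - x) ⟨by linarith [hx.2], by linarith [hx.1]⟩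
  rw [sub_sub_cancel] at p1
  have hx1 : 0 < 1 - x := by linarith [hx.2]
  have hxx : x ≤ x / (1 - x) := by
    rw [le_div_iff₀ hx1]; nlinarith [hx.1]
  have e1 : |Real.log (φ x / x) - Real.log a| ≤ C / min c a * (x / (1 - x)) := by
    refine (log_lip (lt_min hc ha0) ((min_le_left _ _).trans q1) (min_le_right _ _)).trans ?_
    rw [div_mul_eq_mul_div]
    refine div_le_div_of_nonneg_right (q2.trans ?_) (lt_min hc ha0).le
    exact mul_le_mul_of_nonneg_left hxx hC
  have e2 : |Real.log ((1 - φ x) / (1 - x)) - Real.log 1| ≤ (1 + a + C) / min c' 1 * (x / (1 - x)) := by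
    refine (log_lip (lt_min hc' one_pos) ((min_le_left _ _).trans p1) (min_le_right _ _)).trans ?_
    rw [div_mul_eq_mul_div]
    refine div_le_div_of_nonneg_right ?_ (lt_min hc' one_pos).le
    have h2 : (1 - φ x) / (1 - x) - 1 = (1 - φ x / x) * (x / (1 - x)) := by
      have := hx.1.ne'
      field_simp
      ring
    rw [h2, abs_mul, abs_of_pos (div_pos hx.1 hx1)]
    refine mul_le_mul_of_nonneg_right ?_ (div_pos hx.1 hx1).le
    have h3 := abs_le.1 q2
    have h4 : C * x ≤ C := mul_le_of_le_one_right hC hx.2.le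
    rw [abs_le]
    constructor <;> linarith [h3.1, h3.2]
  rw [Real.log_one, sub_zero] at e2
  have h1 := abs_le.1 e1
  have h2 := abs_le.1 e2
  rw [abs_le, add_mul]
  constructor <;> linarith [h1.1, h1.2, h2.1, h2.2]

noncomputable def lg (x : ℝ) : ℝ := Real.log (x / (1 - x))

theorem sig_mem (s : ℝ) : Real.sigmoid s ∈ Ioo (0:ℝ) 1 := by
  rw [← Real.range_sigmoid]; exact mem_range_self s

theorem sig_div (s : ℝ) : Real.sigmoid s / (1 - Real.sigmoid s) = Real.exp s := by
  have h := Real.sigmoid_mul_rexp_neg s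
  have h1 := sig_mem s
  have h3 : 1 - Real.sigmoid s = Real.sigmoid (-s) := by rw [Real.sigmoid_neg]
  have h4 : (0:ℝ) < 1 - Real.sigmoid s := by linarith [h1.2]
  rw [div_eq_iff h4.ne', h3, ← h, mul_comm, mul_assoc, ← Real.exp_add]
  simp

theorem lg_sig (s : ℝ) : lg (Real.sigmoid s) = s := by
  rw [lg, sig_div, Real.log_exp]

theorem sig_lg {x : ℝ} (hx : x ∈ Ioo (0:ℝ) 1) : Real.sigmoid (lg x) = x := by
  rw [← Real.range_sigmoid] at hx
  obtain ⟨s, rfl⟩ := hx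
  rw [lg_sig]

theorem Diff01.iso {φ : ℝ → ℝ} (h : Diff01 φ) :
    ∃ e : ℝ ≃o ℝ, ∀ s, Real.sigmoid (e s) = φ (Real.sigmoid s) := by
  have key : ∀ s, Real.sigmoid (lg (φ (Real.sigmoid s))) = φ (Real.sigmoid s) := fun s =>
    sig_lg (h.maps (sig_mem s))
  have hm : StrictMono (fun s => lg (φ (Real.sigmoid s))) := by
    intro s t hst
    rw [← Real.sigmoid_strictMono.lt_iff_lt, key, key]
    exact h.mono (mem01 (sig_mem s)) (mem01 (sig_mem t)) (Real.sigmoid_strictMono hst)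
  have hs : Surjective (fun s => lg (φ (Real.sigmoid s))) := by
    intro t
    obtain ⟨y, hy, hyt⟩ := h.surj (mem01 (sig_mem t))
    have hy' : y ∈ Ioo (0:ℝ) 1 := by
      refine ⟨lt_of_le_of_ne hy.1 ?_, lt_of_le_of_ne hy.2 ?_⟩
      · rintro rfl
        rw [h.z] at hyt
        exact (sig_mem t).1.ne hyt
      · rintro rfl
        rw [h.o] at hyt
        exact (sig_mem t).2.ne hyt.symm
    refine ⟨lg y, ?_⟩
    simp only [sig_lg hy', hyt, lg_sig]
  exact ⟨StrictMono.orderIsoOfSurjective _ hm hs, key⟩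

theorem disp_eq {φ : ℝ → ℝ} (h : Diff01 φ) (e : ℝ ≃o ℝ)
    (he : ∀ s, Real.sigmoid (e s) = φ (Real.sigmoid s)) (s : ℝ) :
    e s - s = Real.log (φ (Real.sigmoid s) / Real.sigmoid s)
      - Real.log ((1 - φ (Real.sigmoid s)) / (1 - Real.sigmoid s)) := by
  have h1 := h.maps (sig_mem s)
  have h2 := sig_mem s
  have h3 : 0 < 1 - φ (Real.sigmoid s) := by linarith [h1.2]
  have h4 : 0 < 1 - Real.sigmoid s := by linarith [h2.2]
 
  have e1 : e s = lg (φ (Real.sigmoid s)) := by rw [← he, lg_sig]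
  have e2 : e s - s = lg (φ (Real.sigmoid s)) - lg (Real.sigmoid s) := by rw [lg_sig, e1]
  rw [e2]
  unfold lg
  rw [Real.log_div h1.1.ne' h3.ne', Real.log_div h2.1.ne' h4.ne',
    Real.log_div h1.1.ne' h2.1.ne', Real.log_div h3.ne' h4.ne']
  ring

theorem conj_est {φ : ℝ → ℝ} (h : Diff01 φ) (e : ℝ ≃o ℝ)
    (he : ∀ s, Real.sigmoid (e s) = φ (Real.sigmoid s)) :
    ∃ B ≥ 0, (∀ s, |e s - s - Real.log (derivWithin φ (Icc 0 1) 0)| ≤ B * Real.exp s) ∧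
      ∀ s, |e s - s + Real.log (derivWithin φ (Icc 0 1) 1)| ≤ B * Real.exp (-s) := by
  obtain ⟨B1, hB1, h1⟩ := h.est
  obtain ⟨B2, hB2, h2⟩ := h.refl.est
  rw [refl_deriv h.C2 (left_mem_Icc.2 zero_le_one), sub_zero] at h2
  refine ⟨B1 + B2, by positivity, fun s => ?_, fun s => ?_⟩
  · have := h1 _ (sig_mem s)
    rw [← disp_eq h e he, sig_div] at this
    have := mul_nonneg hB2 (Real.exp_pos s).le
    linarith
  · have hs := sig_mem s
    have := h2 (1 - Real.sigmoid s) ⟨by linarith [hs.2], by linarith [hs.1]⟩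
    rw [sub_sub_cancel, sub_sub_cancel, ← Real.sigmoid_neg] at this
    have e2 : Real.sigmoid (-s) / Real.sigmoid s = Real.exp (-s) := by
      rw [← sig_div (-s), Real.sigmoid_neg, sub_sub_cancel]
    rw [e2] at this
    have e3 := disp_eq h e he s
    rw [← Real.sigmoid_neg] at e3
    rw [← abs_neg] at this
    have e4 : e s - s + Real.log (derivWithin φ (Icc 0 1) 1) =
      -(Real.log ((1 - φ (Real.sigmoid s)) / Real.sigmoid (-s)) -
      Real.log (φ (Real.sigmoid s) / Real.sigmoid s) - Real.log (derivWithin φ (Icc 0 1) 1)) := by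
      rw [e3]; ring
    rw [e4]
    have := mul_nonneg hB1 (Real.exp_pos (-s)).le
    linarith

end IDU

namespace IDU

theorem sig_emb : IsOpenEmbedding Real.sigmoid := by
  refine ⟨Real.sigmoid_strictMono.isEmbedding_of_ordConnected ?_, ?_⟩
  · rw [Real.range_sigmoid]; exact ordConnected_Ioo
  · rw [Real.range_sigmoid]; exact isOpen_Ioo

theorem sig_memb : MeasurableEmbedding Real.sigmoid := sig_emb.measurableEmbedding

theorem mkSys {ι : Type*} [Fintype ι] (e : ι → ℝ ≃o ℝ) {w mp mm : ι → ℝ} {B K : ℝ}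
    (hw : ∀ i, 0 < w i) (hw1 : ∑ i, w i = 1) (hB : 0 ≤ B) (hK : 1 ≤ K)
    (hp : 0 ≤ ∑ i, w i * mp i) (hm : 0 ≤ ∑ i, w i * mm i)
    (i0 : ι) (i0p : 0 < mp i0) (i0m : 0 < mm i0)
    (hEp : ∀ i s, |e i s - s + mp i| ≤ B * Real.exp (-s))
    (hEm : ∀ i s, |e i s - s - mm i| ≤ B * Real.exp s)
    (hd : ∀ i s, |e i s - s| ≤ K)
    (hup : ∀ s, ∃ i, e i s < s) (hdn : ∀ s, ∃ i, s < e i s) :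
    Sys w mp mm (fun i => (e i).symm) (B * Real.exp K) K := by
  have hd' : ∀ i s, |(e i).symm s - s| ≤ K := by
    intro i s
    have := hd i ((e i).symm s)
    rw [OrderIso.apply_symm_apply, abs_sub_comm] at this
    exact this
  refine ⟨⟨hw, hw1, hp, ⟨i0, i0p.ne'⟩, by positivity, ?_, hK, hd', fun i => (e i).symm.strictMono,
    fun i => (e i).symm.continuous, ?_, ?_⟩, ⟨hw, hw1, hm, ⟨i0, i0m.ne'⟩, by positivity, ?_, hK, ?_, ?_,
    fun i => ((e i).symm.continuous.comp continuous_neg).neg, ?_, ?_⟩, ⟨i0, i0p, i0m⟩⟩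
  · intro i s
    have h1 := hEp i ((e i).symm s)
    rw [OrderIso.apply_symm_apply, ← abs_neg] at h1
    have h2 := abs_le.1 (hd' i s)
    have h3 : -(s - (e i).symm s + mp i) = (e i).symm s - s - mp i := by ring
    rw [h3] at h1
    refine h1.trans ?_
    rw [mul_assoc, ← Real.exp_add]
    refine mul_le_mul_of_nonneg_left (Real.exp_le_exp.2 (by linarith [h2.1])) hB
  · intro s
    obtain ⟨i, hi⟩ := hup s
    exact ⟨i, (e i).lt_symm_apply.2 hi⟩
  · intro s
    obtain ⟨i, hi⟩ := hdn s
    exact ⟨i, (e i).symm_apply_lt.2 hi⟩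
  · intro i s
    have h1 := hEm i ((e i).symm (-s))
    rw [OrderIso.apply_symm_apply] at h1
    have h2 := abs_le.1 (hd' i (-s))
    have h3 : (-s - (e i).symm (-s) - mm i) = -(e i).symm (-s) - s - mm i := by ring
    rw [h3] at h1
    refine h1.trans ?_
    rw [mul_assoc, ← Real.exp_add]
    refine mul_le_mul_of_nonneg_left (Real.exp_le_exp.2 (by linarith [h2.2])) hB
  · intro i s
    have h1 := hd' i (-s)
    rw [← abs_neg] at h1
    have h3 : -((e i).symm (-s) - -s) = -(e i).symm (-s) - s := by ring
    rwa [h3] at h1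
  · intro i s t hst
    exact neg_lt_neg ((e i).symm.strictMono (neg_lt_neg hst))
  · intro s
    obtain ⟨i, hi⟩ := hdn (-s)
    exact ⟨i, lt_neg_of_lt_neg ((e i).symm_apply_lt.2 hi)⟩
  · intro s
    obtain ⟨i, hi⟩ := hup (-s)
    exact ⟨i, neg_lt_of_neg_lt ((e i).lt_symm_apply.2 hi)⟩

theorem push {ι : Type*} [Fintype ι] (h : ι → ℝ → ℝ) (w : ι → ℝ) (e : ι → ℝ ≃o ℝ)
    (he : ∀ i s, Real.sigmoid (e i s) = h i (Real.sigmoid s))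
    (ν : Measure ℝ) [IsLocallyFiniteMeasure ν] (h0 : ν ≠ 0) (hν : InvR e w ν) :
    ν.map Real.sigmoid ≠ 0 ∧ IsRadonOn01 (ν.map Real.sigmoid) ∧ IsInvOn01 h w (ν.map Real.sigmoid) := by
  have hpre : ∀ K : Set ℝ, K ⊆ Ioo (0:ℝ) 1 → IsCompact K → IsCompact (Real.sigmoid ⁻¹' K) := by
    intro K hK hc
    rw [sig_emb.isEmbedding.isCompact_iff, image_preimage_eq_of_subset (by rwa [Real.range_sigmoid])]
    exact hc
  refine ⟨?_, ⟨?_, ?_⟩, ?_⟩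
  · rwa [Ne, Measure.map_eq_zero_iff sig_memb.measurable.aemeasurable]
  · rw [sig_memb.map_apply]
    have : Real.sigmoid ⁻¹' (Ioo (0:ℝ) 1)ᶜ = ∅ := by
      ext s
      simpa using sig_mem s
    rw [this, measure_empty]
  · intro K hK hc
    rw [sig_memb.map_apply]
    exact (hpre K hK hc).measure_lt_top
  · intro f hf hs hsub
    rw [sig_memb.integral_map]
    simp_rw [sig_memb.integral_map]
    have hc : HasCompactSupport (fun s => f (Real.sigmoid s)) := by
      refine HasCompactSupport.intro (hpre _ hsub hs) fun s hs' => ?_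
      exact image_eq_zero_of_notMem_tsupport hs'
    rw [hν (fun s => f (Real.sigmoid s)) (hf.comp sig_emb.continuous) hc]
    simp_rw [he]

theorem pull {ι : Type*} [Fintype ι] (h : ι → ℝ → ℝ) (w : ι → ℝ) (e : ι → ℝ ≃o ℝ)
    (he : ∀ i s, Real.sigmoid (e i s) = h i (Real.sigmoid s))
    (ν : Measure ℝ) (h0 : ν ≠ 0) (hR : IsRadonOn01 ν) (hν : IsInvOn01 h w ν) :
    ∃ ν' : Measure ℝ, IsLocallyFiniteMeasure ν' ∧ ν' ≠ 0 ∧ InvR e w ν' ∧ ν = ν'.map Real.sigmoid := by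
  have hmap : ν = (ν.comap Real.sigmoid).map Real.sigmoid := by
    rw [sig_memb.map_comap, Real.range_sigmoid, Measure.restrict_eq_self_of_ae_mem]
    rw [ae_iff]
    exact hR.1
  have hfc : IsFiniteMeasureOnCompacts (ν.comap Real.sigmoid) := by
    constructor
    intro K hK
    rw [sig_memb.comap_apply]
    refine hR.2 _ ?_ (hK.image sig_emb.continuous)
    rintro _ ⟨s, -, rfl⟩
    exact sig_mem s
  refine ⟨ν.comap Real.sigmoid, isLocallyFiniteMeasure_of_isFiniteMeasureOnCompacts, ?_, ?_, hmap⟩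
  · intro hz
    rw [hz, Measure.map_zero] at hmap
    exact h0 hmap
  · intro f hf hs
    set F := extend Real.sigmoid f 0 with hF
    have hFs : ∀ s, F (Real.sigmoid s) = f s := fun s =>
      Real.sigmoid_strictMono.injective.extend_apply f 0 s
    have hsub := hs.tsupport_extend_zero_subset sig_emb.continuous
    have hFc : Continuous F := by
      refine continuous_of_tsupport fun x hx => ?_
      obtain ⟨s, -, rfl⟩ := hsub hx
      rw [← sig_emb.continuousAt_iff]
      have : F ∘ Real.sigmoid = f := funext hFs
      rw [this]
      exact hf.continuousAt
    have := hν F hFc (hs.extend_zero sig_emb.continuous) (by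
      intro x hx
      obtain ⟨s, -, rfl⟩ := hsub hx
      exact sig_mem s)
    rw [hmap, sig_memb.integral_map] at this
    simp_rw [sig_memb.integral_map, ← he, hFs] at this
    exact this

end IDU

/-- **Corollary (C² diffeomorphisms of the interval).**
Let `μ` be a finitely supported probability measure on increasing `C²`
diffeomorphisms of `[0,1]`.  Under conditions (R'), (C') and (U') there exists a
nonzero invariant Radon measure on `(0,1)`, unique up to a positive multiplicative
constant. -/
theorem interval_diffeos_unique_invariant_measure
    {ι : Type*} [Fintype ι] (h : ι → ℝ → ℝ) (w : ι → ℝ)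
    (hw : ∀ i, 0 < w i) (hw1 : ∑ i : ι, w i = 1)
    -- each `h i` is an increasing C² diffeomorphism of [0,1]
    (hC2 : ∀ i, ContDiffOn ℝ 2 (h i) (Icc 0 1))
    (h0 : ∀ i, h i 0 = 0) (h1 : ∀ i, h i 1 = 1)
    (hmono : ∀ i, StrictMonoOn (h i) (Icc 0 1))
    (hsurj : ∀ i, SurjOn (h i) (Icc 0 1) (Icc 0 1))
    (hderiv : ∀ i, ∀ u ∈ Icc (0:ℝ) 1, 0 < derivWithin (h i) (Icc 0 1) u)
    -- (R')
    (hR'0 : 0 ≤ ∑ i : ι, w i * Real.log (derivWithin (h i) (Icc 0 1) 0))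
    (hR'1 : 0 ≤ ∑ i : ι, w i * Real.log (derivWithin (h i) (Icc 0 1) 1))
    -- (C')
    (hC' : ∃ i, 1 < derivWithin (h i) (Icc 0 1) 0 ∧ 1 < derivWithin (h i) (Icc 0 1) 1)
    -- (U')
    (hU' : ∀ x ∈ Ioo (0:ℝ) 1, ∃ i j, h i x < x ∧ x < h j x) :
    (∃ ν : Measure ℝ, ν ≠ 0 ∧ IsRadonOn01 ν ∧ IsInvOn01 h w ν) ∧
    ∀ ν₁ ν₂ : Measure ℝ,
      ν₁ ≠ 0 → IsRadonOn01 ν₁ → IsInvOn01 h w ν₁ →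
      ν₂ ≠ 0 → IsRadonOn01 ν₂ → IsInvOn01 h w ν₂ →
      ∃ C : ℝ≥0, 0 < C ∧ ν₁ = C • ν₂ := by
  have hD : ∀ i, IDU.Diff01 (h i) := fun i => ⟨hC2 i, h0 i, h1 i, hmono i, hsurj i, hderiv i⟩
  choose e he using fun i => (hD i).iso
  choose B hB hEm hEp using fun i => IDU.conj_est (hD i) (e i) (he i)
  obtain ⟨i0, hi0, hi1⟩ := hC'
  set mp : ι → ℝ := fun i => Real.log (derivWithin (h i) (Icc 0 1) 1) with hmp
  set mm : ι → ℝ := fun i => Real.log (derivWithin (h i) (Icc 0 1) 0) with hmm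
  set BB := ∑ i, B i with hBB
  have hBle : ∀ i, B i ≤ BB := fun i =>
    Finset.single_le_sum (fun j _ => hB j) (Finset.mem_univ i)
  have hBB0 : 0 ≤ BB := Finset.sum_nonneg fun j _ => hB j
  have hEp' : ∀ i s, |e i s - s + mp i| ≤ BB * Real.exp (-s) := fun i s =>
    (hEp i s).trans (mul_le_mul_of_nonneg_right (hBle i) (Real.exp_pos _).le)
  have hEm' : ∀ i s, |e i s - s - mm i| ≤ BB * Real.exp s := fun i s =>
    (hEm i s).trans (mul_le_mul_of_nonneg_right (hBle i) (Real.exp_pos _).le)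
  set K := 1 + BB + ∑ i, (|mp i| + |mm i|) with hK
  have hS0 : 0 ≤ ∑ i, (|mp i| + |mm i|) := Finset.sum_nonneg fun i _ => by positivity
  have hK1 : 1 ≤ K := by linarith
  have hd : ∀ i s, |e i s - s| ≤ K := by
    intro i s
    have hi : |mp i| + |mm i| ≤ ∑ i, (|mp i| + |mm i|) :=
      Finset.single_le_sum (f := fun i => |mp i| + |mm i|) (fun j _ => by positivity)
        (Finset.mem_univ i)
    have a1 := abs_le.1 (le_refl |mp i|)
    have a2 := abs_le.1 (le_refl |mm i|)
    have a3 := abs_nonneg (mp i)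
    have a4 := abs_nonneg (mm i)
    rcases le_total 0 s with hs | hs
    · have b1 := abs_le.1 (hEp' i s)
      have b2 : BB * Real.exp (-s) ≤ BB :=
        mul_le_of_le_one_right hBB0 (Real.exp_le_one_iff.2 (by linarith))
      rw [abs_le]
      constructor <;> linarith [b1.1, b1.2, a1.1, a1.2]
    · have b1 := abs_le.1 (hEm' i s)
      have b2 : BB * Real.exp s ≤ BB :=
        mul_le_of_le_one_right hBB0 (Real.exp_le_one_iff.2 (by linarith))
      rw [abs_le]
      constructor <;> linarith [b1.1, b1.2, a2.1, a2.2]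
  have i0p : 0 < mp i0 := Real.log_pos hi1
  have i0m : 0 < mm i0 := Real.log_pos hi0
  constructor
  · obtain ⟨ν, hlf, hn, hinv⟩ := IDU.existsR e hw hw1 hBB0 (by linarith) hR'1 hR'0 i0 i0p i0m
      hEp' hEm' hd
    exact ⟨_, IDU.push h w e he ν hn hinv⟩
  · intro ν₁ ν₂ n1 r1 v1 n2 r2 v2
    have hup : ∀ s, ∃ i, e i s < s := by
      intro s
      obtain ⟨i, j, hi, hj⟩ := hU' _ (IDU.sig_mem s)
      refine ⟨i, ?_⟩
      rw [← Real.sigmoid_strictMono.lt_iff_lt, he]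
      exact hi
    have hdn : ∀ s, ∃ i, s < e i s := by
      intro s
      obtain ⟨i, j, hi, hj⟩ := hU' _ (IDU.sig_mem s)
      refine ⟨j, ?_⟩
      rw [← Real.sigmoid_strictMono.lt_iff_lt, he]
      exact hj
    have S := IDU.mkSys e hw hw1 hBB0 hK1 hR'1 hR'0 i0 i0p i0m hEp' hEm' hd hup hdn
    obtain ⟨ν₁', l1, n1', i1, m1⟩ := IDU.pull h w e he ν₁ n1 r1 v1
    obtain ⟨ν₂', l2, n2', i2, m2⟩ := IDU.pull h w e he ν₂ n2 r2 v2
    obtain ⟨C, hC, heq⟩ := IDU.uniqR e S ν₁' ν₂' i1 i2 n1' n2'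
    refine ⟨C, hC, ?_⟩
    rw [m1, m2, heq, Measure.map_smul]
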